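/- arXiv:1210.4582 — 4 statements merged into one kernel-verified Lean document; each statement's English description precedes it below -/
import Mathlib

section
/- Let ε ∈ [−1/2, 1/2] with ε ≠ 0. Then there exists a constant C_ε > 0, depending only on A₂, K₂ and ε, such that for every integer N ≥ 2 (h = 1/N) and all i, j ∈ {0,…,N−1}, the midpoint quadrature error satisfies |E^ε_{ij}| ≤ C_ε h² log(1/h). -/
/-!
The two terms of `E^ε_{ij}` are each `O(h² log (1/h))`, so no cancellation is needed.

On the bounded range of grid points `A₂` and `K₂` are bounded, so everything reduces to the
logarithm. If `n` is an integer with `|u - n| ≤ 3/4`, then `|sin (πu)| ≥ |u - n| / 2`, whence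
`|log sin² (πu)| ≤ 2 log 2 - 2 log |u - n|` (`abs_log_sin_sq_le`).

* Point value: `t_{i+ε} - t_j = (i - j + ε) / N` has distance at least `|ε| / N` from the integers,
  because `0 < |ε| ≤ 1/2`; hence the kernel there is `O(log N)`.
* Integral: over any interval of length `h` one has `∫ log |v| dv ≥ h log h - 2h`
  (`integral_log_lower`), which bounds the inner integral by `O(h log N)` uniformly in the outer
  variable; the outer integration contributes a factor `h`.
-/

noncomputable section

/-- Smooth kernel data, 1-periodic in each variable. -/
def SPK (A : ℝ → ℝ → ℂ) : Prop :=
  ContDiff ℝ (⊤ : ℕ∞) (fun p : ℝ × ℝ => A p.1 p.2) ∧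
    (∀ s t, A (s + 1) t = A s t) ∧ (∀ s t, A s (t + 1) = A s t)

/-- Logarithmic kernel `V(s,t) = (i/(2π)) A(s,t) log(sin²(π(s−t))) + K(s,t)`. -/
def logKer (A K : ℝ → ℝ → ℂ) (s t : ℝ) : ℂ :=
  Complex.I / (2 * Real.pi) * A s t * (Real.log (Real.sin (Real.pi * (s - t)) ^ 2) : ℂ) + K s t

/-- Grid point `s_{j+ε} = (j − 1/2 + ε)h`. -/
def sg (h ε : ℝ) (j : ℤ) : ℝ := ((j : ℝ) - 1 / 2 + ε) * h

/-- Grid point `t_{j+ε} = (j + ε)h`. -/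
def tg (h ε : ℝ) (j : ℤ) : ℝ := ((j : ℝ) + ε) * h

/-- Integral operator with kernel `V`. -/
def Vop (V : ℝ → ℝ → ℂ) (φ : ℝ → ℂ) (s : ℝ) : ℂ := ∫ t in (0:ℝ)..1, V s t * φ t

/-- Hypersingular operator `W = −D V₁ D + V₂`. -/
def Wop (V1 V2 : ℝ → ℝ → ℂ) (φ : ℝ → ℂ) (s : ℝ) : ℂ :=
  -deriv (Vop V1 (deriv φ)) s + Vop V2 φ s

/-- Nyström matrix entries `W^ε_{ij}`. -/
def Wmat (V1 V2 : ℝ → ℝ → ℂ) (h ε : ℝ) (i j : ℤ) : ℂ :=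
  V1 (sg h ε (i + 1)) (sg h 0 (j + 1)) - V1 (sg h ε i) (sg h 0 (j + 1))
    - V1 (sg h ε (i + 1)) (sg h 0 j) + V1 (sg h ε i) (sg h 0 j)
    + (h : ℂ) ^ 2 * V2 (tg h ε i) (tg h 0 j)

/-- Fourier coefficient of a 1-periodic function. -/
def fc (u : ℝ → ℂ) (m : ℤ) : ℂ :=
  ∫ t in (0:ℝ)..1, u t * Complex.exp (-(2 * Real.pi * Complex.I * (m : ℂ) * (t : ℂ)))

/-- Periodic Sobolev norm of order `r`. -/
def sobNorm (r : ℝ) (u : ℝ → ℂ) : ℝ :=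
  Real.sqrt (‖fc u 0‖ ^ 2 +
    ∑' m : ℤ, if m = 0 then 0 else |(m : ℝ)| ^ (2 * r) * ‖fc u m‖ ^ 2)

/-- 1-periodic step function on the ε-shifted grid with coefficients `v`. -/
def stepf (N : ℕ) (ε : ℝ) (v : ZMod N → ℂ) (s : ℝ) : ℂ :=
  v ((⌊s * N + 1 / 2 - ε⌋ : ℤ) : ZMod N)

/-- Midpoint quadrature error matrix entries `E^ε_{ij}`. -/
def Emat (V2 : ℝ → ℝ → ℂ) (h ε : ℝ) (i j : ℤ) : ℂ :=
  (∫ s in (sg h ε i)..(sg h ε (i + 1)), ∫ t in (sg h 0 j)..(sg h 0 (j + 1)), V2 s t)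
    - (h : ℂ) ^ 2 * V2 (tg h ε i) (tg h 0 j)

/-- Spectral (ℓ²-operator) norm of a complex `N×N` matrix. -/
def specNorm {N : ℕ} (M : Matrix (Fin N) (Fin N) ℂ) : ℝ :=
  ‖LinearMap.toContinuousLinearMap (Matrix.toEuclideanLin M)‖

/-- The function `C̄₁(t) = −(1/(2πi)) log(4 sin²(πt))`. -/
def Cbar1 (t : ℝ) : ℂ :=
  -(1 / (2 * Real.pi * Complex.I)) * (Real.log (4 * Real.sin (Real.pi * t) ^ 2) : ℂ)

end

theorem abs_sin_pi_lower (x : ℝ) (hx : |x| ≤ 3 / 4) : |x| / 2 ≤ |Real.sin (Real.pi * x)| := by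
  have hpi := Real.pi_pos
  have key : ∀ y : ℝ, 0 ≤ y → y ≤ 3 / 4 → y / 2 ≤ Real.sin (Real.pi * y) := by
    intro y h0 h1
    rcases le_total y (1 / 2) with h | h
    · have := Real.mul_le_sin (x := Real.pi * y) (by positivity) (by nlinarith)
      have e : 2 / Real.pi * (Real.pi * y) = 2 * y := by field_simp
      linarith
    · have := Real.mul_le_sin (x := Real.pi * (1 - y))
        (mul_nonneg hpi.le (by linarith)) (by nlinarith)
      have e : 2 / Real.pi * (Real.pi * (1 - y)) = 2 * (1 - y) := by field_simp
      have e2 : Real.sin (Real.pi * (1 - y)) = Real.sin (Real.pi * y) := by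
        rw [← Real.sin_pi_sub]; congr 1; ring
      linarith
  have h := key |x| (abs_nonneg x) hx
  rcases abs_choice x with h' | h'
  · rw [h'] at h ⊢; exact h.trans (le_abs_self _)
  · rw [h'] at h ⊢
    rw [mul_neg, Real.sin_neg] at h
    exact h.trans (neg_le_abs _)

/-- At `u = n` both logarithms take the value `0`, so that case needs no exclusion. -/
theorem abs_log_sin_sq_le (u : ℝ) (n : ℤ) (hu : |u - n| ≤ 3 / 4) :
    |Real.log (Real.sin (Real.pi * u) ^ 2)| ≤ 2 * Real.log 2 - 2 * Real.log (u - n) := by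
  have hs : |Real.sin (Real.pi * u)| = |Real.sin (Real.pi * (u - n))| := by
    rw [mul_sub, mul_comm Real.pi (n : ℝ), Real.sin_sub_int_mul_pi, abs_mul, abs_zpow]
    simp
  have hl := abs_sin_pi_lower _ hu
  rw [← hs] at hl
  rw [Real.log_pow, ← Real.log_abs (Real.sin _), ← Real.log_abs (u - n)]
  have h2 := Real.log_pos (one_lt_two)
  rcases (abs_nonneg (u - n)).eq_or_lt with h0 | h0
  · have : Real.sin (Real.pi * u) = 0 := by
      rw [← abs_eq_zero, hs, abs_eq_zero.mp h0.symm]; simp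
    rw [this, ← h0]; simp; linarith
  · have h1 := Real.log_le_log (by positivity) hl
    rw [Real.log_div h0.ne' (by norm_num)] at h1
    have h3 : Real.log |Real.sin (Real.pi * u)| ≤ 0 :=
      Real.log_nonpos (abs_nonneg _) (Real.abs_sin_le_one _)
    push_cast
    rw [abs_of_nonpos (by linarith)]
    linarith

theorem mul_log_lower (p h : ℝ) (hp : 0 ≤ p) (hh : 0 < h) :
    p * Real.log h + p - h ≤ p * Real.log p := by
  rcases hp.eq_or_lt with h0 | h0
  · subst h0; simp; linarith
  · have h1 := Real.log_le_sub_one_of_pos (div_pos hh h0)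
    rw [Real.log_div hh.ne' h0.ne'] at h1
    have h2 := mul_le_mul_of_nonneg_left h1 hp
    have e : p * (h / p - 1) = h - p := by field_simp
    nlinarith

/-- Among intervals of length `h`, one around `0` is the worst; the bound is uniform in the
position `b`. -/
theorem integral_log_lower (b h : ℝ) (hh : 0 < h) :
    h * Real.log h - 2 * h ≤ ∫ v in b..(b + h), Real.log v := by
  rw [integral_log]
  -- superadditivity of `x log x` settles intervals on one side of `0`
  have key : ∀ c : ℝ, 0 ≤ c →
      c * Real.log c + h * Real.log h ≤ (c + h) * Real.log (c + h) := by
    intro c hc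
    have h1 := Real.log_le_log hh (by linarith : h ≤ c + h)
    rcases hc.eq_or_lt with h0 | h0
    · subst h0; simp
    · have h2 := Real.log_le_log h0 (by linarith : c ≤ c + h)
      nlinarith
  rcases le_total 0 b with hb | hb
  · have := key b hb
    linarith
  · rcases le_total 0 (b + h) with hb' | hb'
    · have h1 := mul_log_lower (b + h) h hb' hh
      have h2 := mul_log_lower (-b) h (by linarith) hh
      rw [Real.log_neg_eq_log] at h2
      nlinarith
    · have := key (-(b + h)) (by linarith)
      rw [Real.log_neg_eq_log, show -(b + h) + h = -b by ring, Real.log_neg_eq_log] at this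
      linarith

theorem norm_logKer_le (A K : ℝ → ℝ → ℂ) (M s t : ℝ) (hA : ‖A s t‖ ≤ M) (hK : ‖K s t‖ ≤ M) :
    ‖logKer A K s t‖ ≤ M * |Real.log (Real.sin (Real.pi * (s - t)) ^ 2)| + M := by
  unfold logKer
  refine (norm_add_le _ _).trans (add_le_add ?_ hK)
  rw [norm_mul, norm_mul, Complex.norm_real, Real.norm_eq_abs]
  refine mul_le_mul_of_nonneg_right ?_ (abs_nonneg _)
  have hpi := Real.pi_gt_three
  have h1 : ‖Complex.I / (2 * Real.pi)‖ ≤ 1 := by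
    rw [norm_div, norm_mul, Complex.norm_I, Complex.norm_real, Real.norm_eq_abs,
      abs_of_pos Real.pi_pos, Complex.norm_ofNat]
    rw [div_le_one (by positivity)]
    linarith
  calc _ ≤ 1 * ‖A s t‖ := mul_le_mul_of_nonneg_right h1 (norm_nonneg _)
    _ ≤ M := by linarith

theorem exists_bound_on_square (A : ℝ → ℝ → ℂ) (hA : SPK A) :
    ∃ M : ℝ, ∀ s ∈ Set.Icc (-2 : ℝ) 2, ∀ t ∈ Set.Icc (-2 : ℝ) 2, ‖A s t‖ ≤ M := by
  obtain ⟨M, hM⟩ := (isCompact_Icc (a := (-2 : ℝ)) (b := 2)).prod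
    (isCompact_Icc (a := (-2 : ℝ)) (b := 2)) |>.exists_bound_of_continuousOn
      hA.1.continuous.continuousOn
  exact ⟨M, fun s hs t ht => hM (s, t) ⟨hs, ht⟩⟩

theorem norm_inner_integral_le (A K : ℝ → ℝ → ℂ) (M s a h : ℝ) (hM : 0 ≤ M) (hh : 0 < h)
    (hh2 : h ≤ 1 / 2)
    (hA : ∀ t ∈ Set.Ioc a (a + h), ‖A s t‖ ≤ M) (hK : ∀ t ∈ Set.Ioc a (a + h), ‖K s t‖ ≤ M) :
    ‖∫ t in a..(a + h), logKer A K s t‖ ≤ M * h * (7 - 2 * Real.log h) := by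
  -- the integer nearest to the midpoint of `s - [a, a + h]` is within `3/4` of the whole interval
  set n : ℤ := round (s - a - h / 2) with hn
  have hr := abs_sub_round (s - a - h / 2)
  rw [← hn, abs_le] at hr
  have hint : ∀ x y : ℝ,
      IntervalIntegrable (fun t => Real.log (s - n - t)) MeasureTheory.volume x y := by
    intro x y
    have h0 : IntervalIntegrable Real.log MeasureTheory.volume (s - n - x) (s - n - y) :=
      intervalIntegral.intervalIntegrable_log'
    have h1 := h0.comp_sub_left (s - n)
    simpa using h1
  have hb := intervalIntegral.norm_integral_le_of_norm_le (μ := MeasureTheory.volume)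
    (f := fun t => logKer A K s t)
    (g := fun t => M * (2 * Real.log 2 + 1) - 2 * M * Real.log (s - n - t))
    (a := a) (b := a + h) (by linarith)
    (Filter.Eventually.of_forall fun t ht => by
      have h1 := norm_logKer_le A K M s t (hA t ht) (hK t ht)
      have h2 := abs_log_sin_sq_le (s - t) n (by
        rw [abs_le]; constructor <;> linarith [ht.1, ht.2])
      have h3 := mul_le_mul_of_nonneg_left h2 hM
      rw [show s - t - (n : ℝ) = s - n - t by ring] at h3
      linarith)
    ((intervalIntegrable_const).sub ((hint _ _).const_mul _))
  refine hb.trans ?_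
  rw [intervalIntegral.integral_sub intervalIntegrable_const
    ((hint _ _).const_mul _), intervalIntegral.integral_const,
    intervalIntegral.integral_const_mul,
    intervalIntegral.integral_comp_sub_left (fun v => Real.log v)]
  have h4 := integral_log_lower (s - n - (a + h)) h hh
  rw [show s - n - (a + h) + h = s - n - a by ring] at h4
  have h5 := mul_le_mul_of_nonneg_left h4 hM
  have h6 : Real.log 2 ≤ 1 := by linarith [Real.log_two_lt_d9]
  have h7 := mul_le_mul_of_nonneg_left h6 (mul_nonneg hM hh.le)
  rw [smul_eq_mul]
  nlinarith

theorem norm_point_value_le (A K : ℝ → ℝ → ℂ) (M ε s t : ℝ) (N : ℕ) (k : ℤ) (hN : 0 < N)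
    (hε1 : |ε| ≤ 1 / 2) (hε0 : ε ≠ 0) (hM : 0 ≤ M) (hA : ‖A s t‖ ≤ M) (hK : ‖K s t‖ ≤ M)
    (hst : s - t = (k + ε) / N) :
    ‖logKer A K s t‖ ≤ M * (3 + 2 * Real.log N - 2 * Real.log |ε|) := by
  have hN' : (0 : ℝ) < N := by exact_mod_cast hN
  have hε : 0 < |ε| := abs_pos.mpr hε0
  set n : ℤ := round (s - t) with hn
  have hr := abs_sub_round (s - t)
  rw [← hn] at hr
  have h1 := abs_log_sin_sq_le (s - t) n (by linarith)
  have hlow : |ε| / N ≤ |s - t - n| := by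
    have e : s - t - n = (((k - n * N : ℤ) : ℝ) + ε) / N := by
      rw [hst]; push_cast; field_simp; ring
    rw [e, abs_div, abs_of_pos hN']
    refine div_le_div_of_nonneg_right ?_ hN'.le
    generalize k - n * N = m
    rcases eq_or_ne m 0 with h0 | h0
    · simp [h0]
    · have hm : (1 : ℝ) ≤ |(m : ℝ)| := by exact_mod_cast Int.one_le_abs h0
      have := abs_sub_abs_le_abs_sub (m : ℝ) (-ε)
      rw [abs_neg, sub_neg_eq_add] at this
      linarith
  have h2 := Real.log_le_log (by positivity) hlow
  rw [Real.log_abs, Real.log_div hε.ne' hN'.ne'] at h2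
  have h3 := norm_logKer_le A K M s t hA hK
  have h6 : Real.log 2 ≤ 1 := by linarith [Real.log_two_lt_d9]
  have h7 : |Real.log (Real.sin (Real.pi * (s - t)) ^ 2)|
      ≤ 2 + 2 * Real.log N - 2 * Real.log |ε| := by linarith
  nlinarith [mul_le_mul_of_nonneg_left h7 hM]

/-- entrywise bound `|E^ε_{ij}| ≤ C_ε h² log(1/h)` for the midpoint
quadrature error matrix. -/
theorem stmt_3
    (A2 K2 : ℝ → ℝ → ℂ) (hA2 : SPK A2) (hK2 : SPK K2)
    (ε : ℝ) (hε1 : ε ∈ Set.Icc (-(1:ℝ)/2) (1/2)) (hε0 : ε ≠ 0) :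
    ∃ C > (0:ℝ), ∀ N : ℕ, 2 ≤ N → ∀ i j : ℤ,
      0 ≤ i → i < (N : ℤ) → 0 ≤ j → j < (N : ℤ) →
        ‖Emat (logKer A2 K2) (1 / (N : ℝ)) ε i j‖ ≤
          C * (1 / (N : ℝ)) ^ 2 * Real.log (N : ℝ) := by
  obtain ⟨M₁, hM₁⟩ := exists_bound_on_square A2 hA2
  obtain ⟨M₂, hM₂⟩ := exists_bound_on_square K2 hK2
  set M : ℝ := max 1 (max M₁ M₂) with hMdef
  have hM : 1 ≤ M := le_max_left _ _
  have hM1 : M₁ ≤ M := (le_max_left _ _).trans (le_max_right _ _)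
  have hM2 : M₂ ≤ M := (le_max_right _ _).trans (le_max_right _ _)
  obtain ⟨hεl, hεu⟩ := hε1
  have hεa : |ε| ≤ 1 / 2 := abs_le.mpr ⟨by linarith, hεu⟩
  have hlogε : Real.log |ε| ≤ 0 := Real.log_nonpos (abs_nonneg _) (by linarith)
  refine ⟨M * (4 + 2 * (10 - 2 * Real.log |ε|)), mul_pos (by linarith) (by linarith), ?_⟩
  intro N hN i j hi0 hiN hj0 hjN
  have hN2 : (2 : ℝ) ≤ N := by exact_mod_cast hN
  have hi0' : (0 : ℝ) ≤ i := by exact_mod_cast hi0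
  have hj0' : (0 : ℝ) ≤ j := by exact_mod_cast hj0
  have hiN' : (i : ℝ) + 1 ≤ N := by exact_mod_cast hiN
  have hjN' : (j : ℝ) + 1 ≤ N := by exact_mod_cast hjN
  set h : ℝ := 1 / (N : ℝ) with hh
  have hpos : 0 < h := by positivity
  have hhalf : h ≤ 1 / 2 := by
    rw [hh]; exact one_div_le_one_div_of_le (by norm_num) hN2
  have hNh : (N : ℝ) * h = 1 := by rw [hh]; field_simp
  have hlogh : Real.log h = -Real.log N := by rw [hh, one_div, Real.log_inv]
  -- every grid coordinate that occurs lies in `[-2, 2]`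
  have hgrid : ∀ x : ℝ, -1 ≤ x → x ≤ N → x * h ∈ Set.Icc (-2 : ℝ) 2 := by
    intro x h1 h2
    constructor <;> nlinarith
  have hAM : ∀ s ∈ Set.Icc (-2 : ℝ) 2, ∀ t ∈ Set.Icc (-2 : ℝ) 2, ‖A2 s t‖ ≤ M :=
    fun s hs t ht => (hM₁ s hs t ht).trans hM1
  have hKM : ∀ s ∈ Set.Icc (-2 : ℝ) 2, ∀ t ∈ Set.Icc (-2 : ℝ) 2, ‖K2 s t‖ ≤ M :=
    fun s hs t ht => (hM₂ s hs t ht).trans hM2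
  have hsuc : ∀ (δ : ℝ) (k : ℤ), sg h δ (k + 1) = sg h δ k + h := by
    intro δ k; unfold sg; push_cast; ring
  have hrange : ∀ (δ : ℝ) (k : ℤ), -1 / 2 ≤ δ → δ ≤ 1 / 2 → (0 : ℝ) ≤ k → (k : ℝ) + 1 ≤ N →
      ∀ x ∈ Set.Ioc (sg h δ k) (sg h δ k + h), x ∈ Set.Icc (-2 : ℝ) 2 := by
    intro δ k h1 h2 h3 h4 x hx
    have l := hgrid (k - 1 / 2 + δ) (by linarith) (by linarith)
    have r := hgrid (((k + 1 : ℤ) : ℝ) - 1 / 2 + δ) (by push_cast; linarith)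
      (by push_cast; linarith)
    have e := hsuc δ k
    have el : sg h δ k = (k - 1 / 2 + δ) * h := rfl
    have er : sg h δ (k + 1) = (((k + 1 : ℤ) : ℝ) - 1 / 2 + δ) * h := rfl
    exact ⟨by linarith [hx.1, l.1], by linarith [hx.2, r.2]⟩
  have hI : ‖∫ s in (sg h ε i)..(sg h ε (i + 1)), ∫ t in (sg h 0 j)..(sg h 0 (j + 1)),
      logKer A2 K2 s t‖ ≤ M * h * (7 - 2 * Real.log h) * h := by
    rw [hsuc, hsuc]
    have := intervalIntegral.norm_integral_le_of_norm_le_const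
      (f := fun s => ∫ t in (sg h 0 j)..(sg h 0 j + h), logKer A2 K2 s t)
      (a := sg h ε i) (b := sg h ε i + h) (C := M * h * (7 - 2 * Real.log h)) (by
        intro s hs
        rw [Set.uIoc_of_le (by linarith)] at hs
        have hs' := hrange ε i hεl hεu hi0' hiN' s hs
        have ht' := hrange 0 j (by norm_num) (by norm_num) hj0' hjN'
        exact norm_inner_integral_le A2 K2 M s _ h (by linarith) hpos hhalf
          (fun t ht => hAM s hs' t (ht' t ht)) (fun t ht => hKM s hs' t (ht' t ht)))
    rwa [add_sub_cancel_left, abs_of_pos hpos] at this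
  have hP : ‖logKer A2 K2 (tg h ε i) (tg h 0 j)‖
      ≤ M * (3 + 2 * Real.log N - 2 * Real.log |ε|) := by
    have hs := hgrid (i + ε) (by linarith) (by linarith)
    have ht := hgrid (j + 0) (by linarith) (by linarith)
    refine norm_point_value_le A2 K2 M ε _ _ N (i - j) (by omega) hεa hε0 (by linarith)
      (hAM _ hs _ ht) (hKM _ hs _ ht) ?_
    unfold tg; rw [hh]; push_cast; ring
  have hlogN : 1 ≤ 2 * Real.log N := by
    have := Real.log_le_log (by norm_num) hN2
    linarith [Real.log_two_gt_d9]
  unfold Emat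
  calc _ ≤ M * h * (7 - 2 * Real.log h) * h
        + h ^ 2 * (M * (3 + 2 * Real.log N - 2 * Real.log |ε|)) := by
        refine (norm_sub_le _ _).trans (add_le_add hI ?_)
        rw [norm_mul, norm_pow, Complex.norm_real, Real.norm_eq_abs, abs_of_pos hpos]
        exact mul_le_mul_of_nonneg_left hP (by positivity)
    _ = M * h ^ 2 * (4 * Real.log N + (10 - 2 * Real.log |ε|) * 1) := by rw [hlogh]; ring
    _ ≤ M * h ^ 2 * (4 * Real.log N + (10 - 2 * Real.log |ε|) * (2 * Real.log N)) := by
        refine mul_le_mul_of_nonneg_left ?_ (by positivity)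
        have := mul_le_mul_of_nonneg_left hlogN (by linarith : 0 ≤ 10 - 2 * Real.log |ε|)
        linarith
    _ = _ := by ring
end

section
/- There exists a constant C > 0, depending only on A₂ and K₂ and independent of ε, such that for every positive integer N (h = 1/N), every ε ∈ [−1/2, 1/2], and all integers i, j with 2 ≤ |i − j| ≤ N/2, the midpoint quadrature error satisfies |E^ε_{ij}| ≤ C h² / |i − j|². -/
/-! ### The one-dimensional midpoint rule -/

/-- One-dimensional midpoint rule: if `‖f''‖ ≤ M` on `[c - δ, c + δ]`, the error is `O(M δ³)`. -/
lemma midpoint_error (f f' f'' : ℝ → ℂ) (c δ M : ℝ) (hδ : 0 ≤ δ)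
    (h1 : ∀ x ∈ Set.Icc (c - δ) (c + δ), HasDerivAt f (f' x) x)
    (h2 : ∀ x ∈ Set.Icc (c - δ) (c + δ), HasDerivAt f' (f'' x) x)
    (hM : ∀ x ∈ Set.Icc (c - δ) (c + δ), ‖f'' x‖ ≤ M) :
    ‖(∫ x in (c - δ)..(c + δ), f x) - ((2 * δ : ℝ) : ℂ) * f c‖ ≤ 2 * M * δ ^ 3 := by
  have hc : c ∈ Set.Icc (c - δ) (c + δ) := ⟨by linarith, by linarith⟩
  have hM0 : 0 ≤ M := (norm_nonneg _).trans (hM c hc)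
  have hd : ∀ x ∈ Set.Icc (c - δ) (c + δ), ‖x - c‖ ≤ δ := fun x hx => by
    rw [Real.norm_eq_abs, abs_le]; constructor <;> linarith [hx.1, hx.2]
  have hf' : ∀ x ∈ Set.Icc (c - δ) (c + δ), ‖f' x - f' c‖ ≤ M * δ := fun x hx =>
    ((convex_Icc _ _).norm_image_sub_le_of_norm_hasDerivWithin_le
      (fun y hy => (h2 y hy).hasDerivWithinAt) hM hc hx).trans
      (mul_le_mul_of_nonneg_left (hd x hx) hM0)
  -- `g` is the first-order Taylor remainder of `f` at the midpoint
  set g : ℝ → ℂ := fun x => f x - ((x - c : ℝ) : ℂ) * f' c with hg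
  have hgd : ∀ x ∈ Set.Icc (c - δ) (c + δ), HasDerivAt g (f' x - f' c) x := fun x hx => by
    have := (h1 x hx).sub ((((hasDerivAt_id x).sub_const c).ofReal_comp).mul_const (f' c))
    exact this.congr_deriv (by simp)
  have hgb : ∀ x ∈ Set.Icc (c - δ) (c + δ), ‖g x - f c‖ ≤ M * δ * δ := fun x hx => by
    have := (convex_Icc _ _).norm_image_sub_le_of_norm_hasDerivWithin_le
      (fun y hy => (hgd y hy).hasDerivWithinAt) hf' hc hx
    have h3 : g c = f c := by simp [hg]
    rw [h3] at this
    exact this.trans (mul_le_mul_of_nonneg_left (hd x hx) (by positivity))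
  have hle : c - δ ≤ c + δ := by linarith
  have hfi : IntervalIntegrable f MeasureTheory.volume (c - δ) (c + δ) := by
    apply ContinuousOn.intervalIntegrable
    rw [Set.uIcc_of_le hle]
    exact fun x hx => (h1 x hx).continuousAt.continuousWithinAt
  have hlin : (∫ x in (c - δ)..(c + δ), ((x - c : ℝ) : ℂ) * f' c) = 0 := by
    rw [intervalIntegral.integral_mul_const, intervalIntegral.integral_ofReal]
    have : (∫ x in (c - δ)..(c + δ), (x - c)) = 0 := by
      rw [intervalIntegral.integral_sub (by simp) (by simp)]
      simp
      ring
    simp [this]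
  have hint : (∫ x in (c - δ)..(c + δ), (g x - f c))
      = (∫ x in (c - δ)..(c + δ), f x) - ((2 * δ : ℝ) : ℂ) * f c := by
    have hl : IntervalIntegrable (fun x : ℝ => ((x - c : ℝ) : ℂ) * f' c)
        MeasureTheory.volume (c - δ) (c + δ) :=
      Continuous.intervalIntegrable (by fun_prop) _ _
    rw [intervalIntegral.integral_sub (hfi.sub hl) (by simp),
      intervalIntegral.integral_sub hfi hl, hlin]
    simp
    left
    ring
  rw [← hint]
  have := intervalIntegral.norm_integral_le_of_norm_le_const (a := c - δ) (b := c + δ)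
    (f := fun x => g x - f c) (C := M * δ * δ) (fun x hx => hgb x (by
      rw [Set.uIoc_of_le hle] at hx; exact ⟨hx.1.le, hx.2⟩))
  refine this.trans (le_of_eq ?_)
  rw [show c + δ - (c - δ) = 2 * δ by ring, abs_of_nonneg (by linarith)]
  ring

/-- A logarithmic kernel frozen in one variable has second derivative `O(B / σ)` wherever
`sin² ≥ σ`, since each derivative of `log sin²` costs at most one factor `1 / sin`. -/
lemma midpoint_log (a a' a'' k k' k'' : ℝ → ℂ) (B σ τ c δ : ℝ) (hδ : 0 ≤ δ) (hσ : 0 < σ)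
    (ha : ∀ x, HasDerivAt a (a' x) x) (ha' : ∀ x, HasDerivAt a' (a'' x) x)
    (hk : ∀ x, HasDerivAt k (k' x) x) (hk' : ∀ x, HasDerivAt k' (k'' x) x)
    (ba : ∀ x, ‖a x‖ ≤ B) (ba' : ∀ x, ‖a' x‖ ≤ B) (ba'' : ∀ x, ‖a'' x‖ ≤ B)
    (bk'' : ∀ x, ‖k'' x‖ ≤ B)
    (hs : ∀ x ∈ Set.Icc (c - δ) (c + δ), σ ≤ Real.sin (Real.pi * (x - τ)) ^ 2) :
    ‖(∫ x in (c - δ)..(c + δ), (Complex.I / (2 * Real.pi) * a x *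
          (Real.log (Real.sin (Real.pi * (x - τ)) ^ 2) : ℂ) + k x))
        - ((2 * δ : ℝ) : ℂ) * (Complex.I / (2 * Real.pi) * a c *
          (Real.log (Real.sin (Real.pi * (c - τ)) ^ 2) : ℂ) + k c)‖
      ≤ 2 * (50 * B / σ) * δ ^ 3 := by
  have hB : 0 ≤ B := (norm_nonneg _).trans (ba 0)
  have hpi := Real.pi_pos
  have hne : ∀ x ∈ Set.Icc (c - δ) (c + δ), Real.sin (Real.pi * (x - τ)) ≠ 0 := by
    intro x hx h0
    have := hs x hx
    rw [h0] at this
    norm_num at this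
    linarith
  set L : ℝ → ℝ := fun x => Real.log (Real.sin (Real.pi * (x - τ)) ^ 2)
  set L' : ℝ → ℝ := fun x =>
    2 * Real.pi * Real.cos (Real.pi * (x - τ)) / Real.sin (Real.pi * (x - τ))
  set L'' : ℝ → ℝ := fun x => -2 * Real.pi ^ 2 / Real.sin (Real.pi * (x - τ)) ^ 2
  have hlin : ∀ x, HasDerivAt (fun x : ℝ => Real.pi * (x - τ)) Real.pi x := fun x => by
    simpa using ((hasDerivAt_id x).sub_const τ).const_mul Real.pi
  have hL : ∀ x ∈ Set.Icc (c - δ) (c + δ), HasDerivAt L (L' x) x := fun x hx => by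
    have h0 := hne x hx
    have := (((hlin x).sin.pow 2).log (pow_ne_zero 2 h0))
    refine this.congr_deriv ?_
    simp only [L']
    field_simp
    simp
    ring
  have hL' : ∀ x ∈ Set.Icc (c - δ) (c + δ), HasDerivAt L' (L'' x) x := fun x hx => by
    have h0 := hne x hx
    have := ((hlin x).cos.const_mul (2 * Real.pi)).div (hlin x).sin h0
    refine this.congr_deriv ?_
    simp only [L'']
    field_simp
    linear_combination (-1) * Real.sin_sq_add_cos_sq (Real.pi * (x - τ))
  have key := midpoint_error
    (fun x => Complex.I / (2 * Real.pi) * a x * (L x : ℂ) + k x)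
    (fun x => Complex.I / (2 * Real.pi) * (a' x * (L x : ℂ) + a x * (L' x : ℂ)) + k' x)
    (fun x => Complex.I / (2 * Real.pi) *
      (a'' x * (L x : ℂ) + a' x * (L' x : ℂ) + (a' x * (L' x : ℂ) + a x * (L'' x : ℂ))) + k'' x)
    c δ (50 * B / σ) hδ ?_ ?_ ?_
  · exact key
  · intro x hx
    refine ((((ha x).const_mul _).mul (hL x hx).ofReal_comp).add (hk x)).congr_deriv ?_
    ring
  · intro x hx
    exact ((((ha' x).mul (hL x hx).ofReal_comp).add
      ((ha x).mul (hL' x hx).ofReal_comp)).const_mul _).add (hk' x)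
  · intro x hx
    set S := Real.sin (Real.pi * (x - τ)) with hS
    have h0 : S ≠ 0 := hne x hx
    have hSσ : σ ≤ S ^ 2 := hs x hx
    have hS1 : S ^ 2 ≤ 1 := Real.sin_sq_le_one _
    have hS0 : 0 < S ^ 2 := by positivity
    have hσS : 1 / S ^ 2 ≤ 1 / σ := one_div_le_one_div_of_le hσ hSσ
    have h1σ : 1 ≤ 1 / σ := by rw [le_div_iff₀ hσ]; linarith
    have bL : ‖(L x : ℂ)‖ ≤ 1 / σ := by
      rw [Complex.norm_real, Real.norm_eq_abs, abs_le]
      have h3 : L x = Real.log (S ^ 2) := rfl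
      have h4 := Real.one_sub_inv_le_log_of_pos hS0
      have h5 := Real.log_nonpos hS0.le hS1
      rw [inv_eq_one_div] at h4
      constructor <;> linarith
    have bL' : ‖(L' x : ℂ)‖ ≤ 2 * Real.pi * (1 / σ) := by
      rw [Complex.norm_real, Real.norm_eq_abs]
      have h3 : L' x = 2 * Real.pi * Real.cos (Real.pi * (x - τ)) / S := rfl
      have hSa : |S| ≤ 1 := Real.abs_sin_le_one _
      have hSp : 0 < |S| := abs_pos.2 h0
      have h4 : 1 / |S| ≤ 1 / S ^ 2 := by
        apply one_div_le_one_div_of_le hS0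
        rw [← sq_abs]; nlinarith
      have hcs := Real.abs_cos_le_one (Real.pi * (x - τ))
      rw [h3, abs_div, abs_mul, abs_of_pos (by positivity : 0 < 2 * Real.pi), mul_div_assoc]
      refine mul_le_mul_of_nonneg_left ?_ (by positivity)
      exact (div_le_div_of_nonneg_right hcs hSp.le).trans (h4.trans hσS)
    have bL'' : ‖(L'' x : ℂ)‖ ≤ 2 * Real.pi ^ 2 * (1 / σ) := by
      rw [Complex.norm_real, Real.norm_eq_abs]
      have h3 : L'' x = -(2 * Real.pi ^ 2 * (1 / S ^ 2)) := by
        simp only [L'', ← hS]; ring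
      rw [h3, abs_neg, abs_of_nonneg (by positivity)]
      exact mul_le_mul_of_nonneg_left hσS (by positivity)
    have hκ : ‖Complex.I / (2 * Real.pi : ℂ)‖ ≤ 1 := by
      rw [norm_div, Complex.norm_I, norm_mul, Complex.norm_real, Real.norm_eq_abs,
        abs_of_pos hpi]
      rw [div_le_one (by simp; positivity)]
      simp
      linarith [Real.pi_gt_three]
    have m1 : ‖a'' x * (L x : ℂ)‖ ≤ B * (1 / σ) := by
      rw [norm_mul]; exact mul_le_mul (ba'' x) bL (norm_nonneg _) hB
    have m2 : ‖a' x * (L' x : ℂ)‖ ≤ B * (2 * Real.pi * (1 / σ)) := by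
      rw [norm_mul]; exact mul_le_mul (ba' x) bL' (norm_nonneg _) hB
    have m3 : ‖a x * (L'' x : ℂ)‖ ≤ B * (2 * Real.pi ^ 2 * (1 / σ)) := by
      rw [norm_mul]; exact mul_le_mul (ba x) bL'' (norm_nonneg _) hB
    have m4 : ‖k'' x‖ ≤ B * (1 / σ) := (bk'' x).trans (le_mul_of_one_le_right hB h1σ)
    have hpi2 : Real.pi ^ 2 ≤ 10 := by nlinarith [Real.pi_lt_d2]
    have hX : 0 ≤ B * (1 / σ) := by positivity
    calc _ ≤ ‖Complex.I / (2 * Real.pi : ℂ)‖ * ‖a'' x * (L x : ℂ) + a' x * (L' x : ℂ)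
            + (a' x * (L' x : ℂ) + a x * (L'' x : ℂ))‖ + ‖k'' x‖ := by
          rw [← norm_mul]; exact norm_add_le _ _
      _ ≤ 1 * (B * (1 / σ) + B * (2 * Real.pi * (1 / σ)) + (B * (2 * Real.pi * (1 / σ))
            + B * (2 * Real.pi ^ 2 * (1 / σ)))) + B * (1 / σ) := by
          refine add_le_add (mul_le_mul hκ ?_ (norm_nonneg _) zero_le_one) m4
          exact (norm_add_le _ _).trans (add_le_add ((norm_add_le _ _).trans (add_le_add m1 m2))
            ((norm_add_le _ _).trans (add_le_add m2 m3)))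
      _ = (B * (1 / σ)) * (2 + 4 * Real.pi + 2 * Real.pi ^ 2) := by ring
      _ ≤ (B * (1 / σ)) * 50 :=
          mul_le_mul_of_nonneg_left (by linarith [Real.pi_lt_four]) hX
      _ = 50 * B / σ := by ring

/-! ### Uniform bounds for smooth periodic functions -/

lemma SPK.swap {A : ℝ → ℝ → ℂ} (h : SPK A) : SPK (fun s t => A t s) :=
  ⟨h.1.comp (contDiff_snd.prodMk contDiff_fst), fun s t => h.2.2 t s, fun s t => h.2.1 t s⟩

lemma SPK.hasDerivAt {A : ℝ → ℝ → ℂ} (h : SPK A) (s t : ℝ) :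
    HasDerivAt (A s) (deriv (A s) t) t := by
  have : ContDiff ℝ (⊤ : ℕ∞) (A s) := h.1.comp (contDiff_const.prodMk contDiff_id)
  exact ((this.differentiable (by simp)) t).hasDerivAt

lemma SPK.deriv_snd {A : ℝ → ℝ → ℂ} (h : SPK A) : SPK (fun s t => deriv (A s) t) := by
  refine ⟨?_, fun s t => ?_, fun s t => ?_⟩
  · have h2 : (fun p : ℝ × ℝ => deriv (A p.1) p.2) =
        fun p => fderiv ℝ (fun p : ℝ × ℝ => A p.1 p.2) p (0, 1) := by
      funext p
      have hd := ((h.1.differentiable (by simp)) p).hasFDerivAt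
      have hl : HasDerivAt (fun t : ℝ => (p.1, t)) ((0 : ℝ), (1 : ℝ)) p.2 :=
        (hasDerivAt_const p.2 p.1).prodMk (hasDerivAt_id p.2)
      exact (hd.comp_hasDerivAt p.2 hl).deriv
    rw [h2]
    exact (h.1.fderiv_right (m := (⊤ : ℕ∞)) (by simp)).clm_apply contDiff_const
  · have : A (s + 1) = A s := funext fun t => h.2.1 s t
    simp only [this]
  · have : (fun t => A s (t + 1)) = A s := funext fun t => h.2.2 s t
    change deriv (A s) (t + 1) = deriv (A s) t
    rw [← deriv_comp_add_const, this]

lemma SPK.bounded {A : ℝ → ℝ → ℂ} (h : SPK A) : ∃ B, ∀ s t, ‖A s t‖ ≤ B := by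
  obtain ⟨B, hB⟩ := ((isCompact_Icc (a := (0 : ℝ)) (b := 1)).prod
    (isCompact_Icc (a := (0 : ℝ)) (b := 1))).exists_bound_of_continuousOn
    h.1.continuous.continuousOn
  refine ⟨B, fun s t => ?_⟩
  have e1 : A s t = A (Int.fract s) t := by
    have hp : Function.Periodic (fun s => A s t) 1 := fun s => h.2.1 s t
    have := hp.sub_int_mul_eq (x := s) ⌊s⌋
    rw [mul_one] at this
    exact this.symm
  have e2 : A (Int.fract s) t = A (Int.fract s) (Int.fract t) := by
    have hp : Function.Periodic (A (Int.fract s)) 1 := fun t => h.2.2 _ t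
    have := hp.sub_int_mul_eq (x := t) ⌊t⌋
    rw [mul_one] at this
    exact this.symm
  rw [e1, e2]
  exact hB (Int.fract s, Int.fract t) ⟨⟨Int.fract_nonneg _, (Int.fract_lt_one _).le⟩,
    ⟨Int.fract_nonneg _, (Int.fract_lt_one _).le⟩⟩

/-! ### The two-dimensional midpoint rule -/

/-- Two-dimensional midpoint rule on a square where `sin² (π (s - t)) ≥ σ`, obtained by applying
the one-dimensional rule in `t` for every `s`, and then in `s` at the central `t`. -/
lemma midpoint_square {A K : ℝ → ℝ → ℂ} (hA : SPK A) (hK : SPK K) :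
    ∃ B > (0 : ℝ), ∀ a b δ σ : ℝ, 0 ≤ δ → 0 < σ →
      (∀ s ∈ Set.Icc (a - δ) (a + δ), ∀ t ∈ Set.Icc (b - δ) (b + δ),
        σ ≤ Real.sin (Real.pi * (s - t)) ^ 2) →
      ‖(∫ s in (a - δ)..(a + δ), ∫ t in (b - δ)..(b + δ), logKer A K s t)
          - ((2 * δ : ℝ) : ℂ) ^ 2 * logKer A K a b‖ ≤ B * δ ^ 4 / σ := by
  have At := hA.deriv_snd
  have Att := At.deriv_snd
  have As := hA.swap.deriv_snd
  have Ass := As.deriv_snd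
  have Kt := hK.deriv_snd
  have Ktt := Kt.deriv_snd
  have Ks := hK.swap.deriv_snd
  have Kss := Ks.deriv_snd
  obtain ⟨B0, h0⟩ := hA.bounded
  obtain ⟨B1, h1⟩ := At.bounded
  obtain ⟨B2, h2⟩ := Att.bounded
  obtain ⟨B3, h3⟩ := As.bounded
  obtain ⟨B4, h4⟩ := Ass.bounded
  obtain ⟨B5, h5⟩ := Ktt.bounded
  obtain ⟨B6, h6⟩ := Kss.bounded
  have p0 := (norm_nonneg _).trans (h0 0 0)
  have p1 := (norm_nonneg _).trans (h1 0 0)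
  have p2 := (norm_nonneg _).trans (h2 0 0)
  have p3 := (norm_nonneg _).trans (h3 0 0)
  have p4 := (norm_nonneg _).trans (h4 0 0)
  have p5 := (norm_nonneg _).trans (h5 0 0)
  have p6 := (norm_nonneg _).trans (h6 0 0)
  obtain ⟨B, hB⟩ : ∃ B, B = B0 + B1 + B2 + B3 + B4 + B5 + B6 := ⟨_, rfl⟩
  have hBp : 0 ≤ B := by linarith
  refine ⟨400 * B + 1, by linarith, fun a b δ σ hδ hσ hs => ?_⟩
  have ha : a ∈ Set.Icc (a - δ) (a + δ) := ⟨by linarith, by linarith⟩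
  have hb : b ∈ Set.Icc (b - δ) (b + δ) := ⟨by linarith, by linarith⟩
  have hla : a - δ ≤ a + δ := by linarith
  have hlb : b - δ ≤ b + δ := by linarith
  have sym : ∀ s t : ℝ, Real.sin (Real.pi * (s - t)) ^ 2 = Real.sin (Real.pi * (t - s)) ^ 2 := by
    intro s t
    rw [show Real.pi * (s - t) = -(Real.pi * (t - s)) by ring, Real.sin_neg, neg_sq]
  have et : ∀ s ∈ Set.Icc (a - δ) (a + δ),
      ‖(∫ t in (b - δ)..(b + δ), logKer A K s t) - ((2 * δ : ℝ) : ℂ) * logKer A K s b‖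
        ≤ 2 * (50 * B / σ) * δ ^ 3 := by
    intro s hsI
    have := midpoint_log (A s) _ _ (K s) _ _ B σ s b δ hδ hσ
      (hA.hasDerivAt s) (At.hasDerivAt s) (hK.hasDerivAt s) (Kt.hasDerivAt s)
      (fun x => (h0 s x).trans (by linarith)) (fun x => (h1 s x).trans (by linarith))
      (fun x => (h2 s x).trans (by linarith)) (fun x => (h5 s x).trans (by linarith))
      (fun x hx => by rw [← sym]; exact hs s hsI x hx)
    simpa only [logKer, sym s] using this
  have es : ‖(∫ s in (a - δ)..(a + δ), logKer A K s b) - ((2 * δ : ℝ) : ℂ) * logKer A K a b‖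
        ≤ 2 * (50 * B / σ) * δ ^ 3 :=
    midpoint_log (fun s => A s b) _ _ (fun s => K s b) _ _ B σ b a δ hδ hσ
      (hA.swap.hasDerivAt b) (As.hasDerivAt b) (hK.swap.hasDerivAt b) (Ks.hasDerivAt b)
      (fun x => (h0 x b).trans (by linarith)) (fun x => (h3 b x).trans (by linarith))
      (fun x => (h4 b x).trans (by linarith)) (fun x => (h6 b x).trans (by linarith))
      (fun x hx => hs x hx b hb)
  -- On the square the kernel agrees with the globally continuous `G`, in which `sin²` is
  -- truncated from below at `σ`; this yields integrability in `s`.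
  set G : ℝ → ℝ → ℂ := fun s t => Complex.I / (2 * Real.pi) * A s t *
    (Real.log (max (Real.sin (Real.pi * (s - t)) ^ 2) σ) : ℂ) + K s t with hG
  have hGc : Continuous (Function.uncurry G) := by
    have c1 : Continuous (fun p : ℝ × ℝ => A p.1 p.2) := hA.1.continuous
    have c2 : Continuous (fun p : ℝ × ℝ => K p.1 p.2) := hK.1.continuous
    have c3 : Continuous (fun p : ℝ × ℝ =>
        Real.log (max (Real.sin (Real.pi * (p.1 - p.2)) ^ 2) σ)) :=
      Continuous.log (by fun_prop) (fun p => (lt_of_lt_of_le hσ (le_max_right _ _)).ne')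
    exact ((continuous_const.mul c1).mul (Complex.continuous_ofReal.comp c3)).add c2
  have hGe : ∀ s ∈ Set.Icc (a - δ) (a + δ), ∀ t ∈ Set.Icc (b - δ) (b + δ),
      logKer A K s t = G s t := by
    intro s hsI t htI
    simp only [hG, logKer, max_eq_left (hs s hsI t htI)]
  have hinner : ∀ s ∈ Set.Icc (a - δ) (a + δ),
      (∫ t in (b - δ)..(b + δ), logKer A K s t) = ∫ t in (b - δ)..(b + δ), G s t := by
    intro s hsI
    refine intervalIntegral.integral_congr fun t ht => ?_
    rw [Set.uIcc_of_le hlb] at ht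
    exact hGe s hsI t ht
  have i1 : IntervalIntegrable (fun s => ∫ t in (b - δ)..(b + δ), logKer A K s t)
      MeasureTheory.volume (a - δ) (a + δ) := by
    have hc := intervalIntegral.continuous_parametric_intervalIntegral_of_continuous'
      (μ := MeasureTheory.volume) hGc (b - δ) (b + δ)
    apply ContinuousOn.intervalIntegrable
    rw [Set.uIcc_of_le hla]
    exact hc.continuousOn.congr hinner
  have i2 : IntervalIntegrable (fun s => ((2 * δ : ℝ) : ℂ) * logKer A K s b)
      MeasureTheory.volume (a - δ) (a + δ) := by
    have hc : Continuous (fun s => ((2 * δ : ℝ) : ℂ) * G s b) :=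
      continuous_const.mul (hGc.comp (continuous_id.prodMk continuous_const))
    apply ContinuousOn.intervalIntegrable
    rw [Set.uIcc_of_le hla]
    exact hc.continuousOn.congr fun s hsI => by simp only [hGe s hsI b hb]
  have split : (∫ s in (a - δ)..(a + δ), ∫ t in (b - δ)..(b + δ), logKer A K s t)
          - ((2 * δ : ℝ) : ℂ) ^ 2 * logKer A K a b =
      (∫ s in (a - δ)..(a + δ), ((∫ t in (b - δ)..(b + δ), logKer A K s t)
        - ((2 * δ : ℝ) : ℂ) * logKer A K s b)) +
      ((2 * δ : ℝ) : ℂ) * ((∫ s in (a - δ)..(a + δ), logKer A K s b)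
        - ((2 * δ : ℝ) : ℂ) * logKer A K a b) := by
    rw [intervalIntegral.integral_sub i1 i2, intervalIntegral.integral_const_mul]
    ring
  have n1 := intervalIntegral.norm_integral_le_of_norm_le_const (a := a - δ) (b := a + δ)
    (f := fun s => (∫ t in (b - δ)..(b + δ), logKer A K s t)
        - ((2 * δ : ℝ) : ℂ) * logKer A K s b)
    (C := 2 * (50 * B / σ) * δ ^ 3) (fun x hx => et x (by
      rw [Set.uIoc_of_le hla] at hx; exact ⟨hx.1.le, hx.2⟩))
  rw [show a + δ - (a - δ) = 2 * δ by ring, abs_of_nonneg (by linarith)] at n1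
  have n2 : ‖((2 * δ : ℝ) : ℂ) * ((∫ s in (a - δ)..(a + δ), logKer A K s b)
        - ((2 * δ : ℝ) : ℂ) * logKer A K a b)‖ ≤ 2 * δ * (2 * (50 * B / σ) * δ ^ 3) := by
    rw [norm_mul, Complex.norm_real, Real.norm_eq_abs, abs_of_nonneg (by linarith)]
    exact mul_le_mul_of_nonneg_left es (by linarith)
  rw [split]
  refine (norm_add_le _ _).trans ((add_le_add n1 n2).trans ?_)
  have : 0 ≤ δ ^ 4 / σ := by positivity
  calc _ = 400 * B * (δ ^ 4 / σ) := by ring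
    _ ≤ (400 * B + 1) * (δ ^ 4 / σ) := by nlinarith
    _ = _ := by ring

/-- Jordan's inequality in the form needed for points at distance at least `ρ` from `0`
and from `±1`. -/
lemma sin_sq_lower (x ρ : ℝ) (hρ : 0 ≤ ρ) (h1 : ρ ≤ |x|) (h2 : |x| ≤ 1 - ρ) :
    (2 * ρ) ^ 2 ≤ Real.sin (Real.pi * x) ^ 2 := by
  have hpi := Real.pi_pos
  have habs : Real.sin (Real.pi * x) ^ 2 = Real.sin (Real.pi * |x|) ^ 2 := by
    rcases abs_choice x with h | h <;> rw [h]
    rw [mul_neg, Real.sin_neg, neg_sq]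
  rw [habs]
  refine pow_le_pow_left₀ (by linarith) ?_ 2
  generalize |x| = y at h1 h2
  rcases le_total y (1 / 2) with h | h
  · have := Real.mul_le_sin (x := Real.pi * y) (by nlinarith) (by nlinarith)
    have e : 2 / Real.pi * (Real.pi * y) = 2 * y := by field_simp
    linarith
  · have := Real.mul_le_sin (x := Real.pi * (1 - y)) (by nlinarith) (by nlinarith)
    have e : 2 / Real.pi * (Real.pi * (1 - y)) = 2 * (1 - y) := by field_simp
    have e2 : Real.sin (Real.pi * (1 - y)) = Real.sin (Real.pi * y) := by
      rw [← Real.sin_pi_sub]; congr 1; ring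
    linarith

/-- off-diagonal bound `|E^ε_{ij}| ≤ C h²/|i−j|²`, uniformly in `ε`. -/
theorem stmt_4
    (A2 K2 : ℝ → ℝ → ℂ) (hA2 : SPK A2) (hK2 : SPK K2) :
    ∃ C > (0:ℝ), ∀ N : ℕ, 0 < N → ∀ ε ∈ Set.Icc (-(1:ℝ)/2) (1/2), ∀ i j : ℤ,
      2 ≤ |i - j| → (|i - j| : ℝ) ≤ (N : ℝ) / 2 →
        ‖Emat (logKer A2 K2) (1 / (N : ℝ)) ε i j‖ ≤
          C * (1 / (N : ℝ)) ^ 2 / (|i - j| : ℝ) ^ 2 := by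
  obtain ⟨B, hB, key⟩ := midpoint_square hA2 hK2
  refine ⟨B, hB, fun N hN ε hε i j hij hijN => ?_⟩
  have hNr : (0 : ℝ) < N := by exact_mod_cast hN
  have h2 : (2 : ℝ) ≤ |(i : ℝ) - j| := by exact_mod_cast hij
  obtain ⟨h, hh⟩ : ∃ h : ℝ, h = 1 / (N : ℝ) := ⟨_, rfl⟩
  have hhp : 0 < h := by rw [hh]; positivity
  have hhN : h * N = 1 := by rw [hh]; field_simp
  obtain ⟨m, hm⟩ : ∃ m : ℝ, m = |(i : ℝ) - j| := ⟨_, rfl⟩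
  rw [← hm] at h2 hijN ⊢
  rw [← hh]
  have hmh : m * h ≤ 1 / 2 := by nlinarith
  have hmhp : 0 < m * h := by positivity
  have e1 : sg h ε i = tg h ε i - h / 2 := by simp only [sg, tg]; ring
  have e2 : sg h ε (i + 1) = tg h ε i + h / 2 := by simp only [sg, tg]; push_cast; ring
  have e3 : sg h 0 j = tg h 0 j - h / 2 := by simp only [sg, tg]; ring
  have e4 : sg h 0 (j + 1) = tg h 0 j + h / 2 := by simp only [sg, tg]; push_cast; ring
  -- The square lies at distance at least `m h / 4` from the singular lines `s - t ∈ ℤ`.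
  have := key (tg h ε i) (tg h 0 j) (h / 2) ((2 * (m * h / 4)) ^ 2) (by positivity)
    (by positivity) (fun s hs t ht => by
      obtain ⟨hε1, hε2⟩ := hε
      have hd : |(s - t) - ((i : ℝ) - j) * h| ≤ 3 / 2 * h := by
        simp only [tg] at hs ht
        rw [abs_le]
        constructor <;> nlinarith [hs.1, hs.2, ht.1, ht.2]
      have hmm : |((i : ℝ) - j) * h| = m * h := by rw [abs_mul, abs_of_pos hhp, hm]
      have u1 := abs_sub_abs_le_abs_sub (s - t) (((i : ℝ) - j) * h)
      have u2 := abs_sub_abs_le_abs_sub (((i : ℝ) - j) * h) (s - t)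
      rw [abs_sub_comm (((i : ℝ) - j) * h)] at u2
      rw [hmm] at u1 u2
      apply sin_sq_lower
      · positivity
      · nlinarith
      · nlinarith)
  have e5 : ((2 * (h / 2) : ℝ) : ℂ) = (h : ℂ) := by congr 1; ring
  rw [e5] at this
  simp only [Emat, e1, e2, e3, e4]
  refine this.trans (le_trans (b := B * h ^ 2 / m ^ 2 / 4) (le_of_eq ?_) ?_)
  · field_simp
    norm_num
  · have : 0 ≤ B * h ^ 2 / m ^ 2 := by positivity
    linarith
end

section
/- Let ε ∈ [−1/2, 1/2] with ε ≠ 0. Then there exists a constant C_ε > 0, depending only on A₂, K₂ and ε, such that for every integer N ≥ 2 (h = 1/N) and all vectors ψ = (ψ₀,…,ψ_{N−1}), φ = (φ₀,…,φ_{N−1}) ∈ ℂ^N, setting ψ_h = Σ_i ψ_i χ_{i+ε} and φ_h = Σ_j φ_j χ_j, one has | ∫₀¹ ∫₀¹ ψ_h(s) V₂(s,t) φ_h(t) dt ds − h² Σ_{i,j=0}^{N−1} ψ_i V₂(t_{i+ε}, t_j) φ_j | ≤ C_ε h^{1/2} ‖ψ_h‖₀ ‖φ_h‖₀. -/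
open MeasureTheory Set

/-! ### The majorant -/

/-- The majorant `h / (S^{1/4} (S+h)^{3/4})` of the local quadrature error, where `S` stands for
`|sin (π (s - t))|`.  Fourth roots are encoded as iterated square roots; at `S = 0` the value is
the junk `0`, which only concerns a null set. -/
noncomputable def maj (h S : ℝ) : ℝ := h / (√(√S) * (√(√(S + h))) ^ 3)

lemma sqrt_sqrt_pow {x : ℝ} (hx : 0 ≤ x) : (√(√x)) ^ 4 = x := by
  rw [show (4 : ℕ) = 2 * 2 from rfl, pow_mul, Real.sq_sqrt (Real.sqrt_nonneg _), Real.sq_sqrt hx]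

lemma maj_nonneg {h S : ℝ} (hh : 0 ≤ h) : 0 ≤ maj h S := by unfold maj; positivity

lemma maj_sq (h S : ℝ) : maj h S ^ 2 = h ^ 2 / (√S * (√(S + h)) ^ 3) := by
  unfold maj
  rw [div_pow, mul_pow, ← pow_mul, mul_comm 3 2, pow_mul, Real.sq_sqrt (Real.sqrt_nonneg _),
    Real.sq_sqrt (Real.sqrt_nonneg _)]

/-- With `p⁴ = S` and `r⁴ = S + h` the left side is `4 log (r / p) ≤ 4 (r / p - 1)`, and
`h = r⁴ - p⁴ ≥ (r - p) r³`. -/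
lemma log_one_add_le_maj {h S : ℝ} (hh : 0 < h) (hS : 0 < S) :
    Real.log (1 + h / S) ≤ 4 * maj h S := by
  have hp4 := sqrt_sqrt_pow hS.le
  have hr4 := sqrt_sqrt_pow (x := S + h) (by positivity)
  have hp : 0 < √(√S) := by positivity
  have hpr : √(√S) ≤ √(√(S + h)) := Real.sqrt_le_sqrt (Real.sqrt_le_sqrt (by linarith))
  unfold maj
  generalize √(√S) = p at *
  generalize √(√(S + h)) = r at *
  have hr : 0 < r := hp.trans_le hpr
  have h1 : 1 + h / S = (r / p) ^ 4 := by
    rw [div_pow, hr4, hp4]; field_simp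
  rw [h1, Real.log_pow]
  have h2 := Real.log_le_sub_one_of_pos (div_pos hr hp)
  have h3 : r / p - 1 ≤ h / (p * r ^ 3) := by
    have : h = r ^ 4 - p ^ 4 := by linarith
    rw [le_div_iff₀ (by positivity)]
    have e : (r / p - 1) * (p * r ^ 3) = (r - p) * r ^ 3 := by field_simp
    rw [e, this]
    have : r ^ 4 - p ^ 4 = (r - p) * r ^ 3 + (r - p) * (r ^ 2 * p + r * p ^ 2 + p ^ 3) := by ring
    have := mul_nonneg (sub_nonneg.2 hpr) (by positivity : 0 ≤ r ^ 2 * p + r * p ^ 2 + p ^ 3)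
    linarith
  push_cast
  linarith

lemma div_le_maj {h S : ℝ} (hh : 0 < h) (hh1 : h ≤ 1) (hS : 0 < S) (hS1 : S ≤ 1) :
    h / √(√S) ≤ 8 * maj h S := by
  have hp : 0 < √(√S) := by positivity
  have hr : 0 < √(√(S + h)) := by positivity
  have hr2 : √(√(S + h)) ≤ 2 := by
    rw [Real.sqrt_le_left (by norm_num), Real.sqrt_le_left (by norm_num)]; linarith
  unfold maj
  generalize √(√S) = p at *
  generalize √(√(S + h)) = r at *
  have : r ^ 3 ≤ 8 := by
    calc r ^ 3 ≤ 2 ^ 3 := by gcongr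
      _ = 8 := by norm_num
  rw [div_le_iff₀ hp]
  have e : 8 * (h / (p * r ^ 3)) * p = 8 * h / r ^ 3 := by field_simp
  rw [e, le_div_iff₀ (by positivity)]
  nlinarith

lemma le_maj {h S : ℝ} (hh : 0 < h) (hh1 : h ≤ 1) (hS : 0 < S) (hS1 : S ≤ 1) :
    h ≤ 8 * maj h S := by
  refine le_trans ?_ (div_le_maj hh hh1 hS hS1)
  rw [le_div_iff₀ (by positivity)]
  have : √(√S) ≤ 1 := Real.sqrt_le_one.2 (Real.sqrt_le_one.2 hS1)
  nlinarith

lemma mul_log_le_maj {h S : ℝ} (hh : 0 < h) (hh1 : h ≤ 1) (hS : 0 < S) (hS1 : S ≤ 1) :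
    h * |Real.log S| ≤ 32 * maj h S := by
  have h1 := div_le_maj hh hh1 hS hS1
  have hp4 := sqrt_sqrt_pow hS.le
  have hp : 0 < √(√S) := by positivity
  rw [abs_of_nonpos (Real.log_nonpos hS.le hS1)]
  have h2 : -Real.log S ≤ 4 * (1 / √(√S)) := by
    conv_lhs => rw [← hp4]
    rw [Real.log_pow, ← mul_neg, ← Real.log_inv]
    have := Real.log_le_sub_one_of_pos (inv_pos.2 hp)
    rw [one_div]; push_cast; linarith
  calc h * -Real.log S ≤ h * (4 * (1 / √(√S))) := by gcongr
    _ = 4 * (h / √(√S)) := by ring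
    _ ≤ _ := by linarith

/-- If `|S - T| ≤ π h` and `T ≥ 2 e h`, the logarithms of `S` and `T` differ by a multiple of the
majorant; the factor depends on `e` only. -/
lemma log_sub_log_le {e : ℝ} (he : 0 < e) : ∃ n : ℕ, ∀ h S T : ℝ, 0 < h → 0 < S →
    |S - T| ≤ Real.pi * h → 2 * e * h ≤ T →
    |Real.log S - Real.log T| ≤ n * maj h S := by
  obtain ⟨n, hn⟩ := exists_nat_ge (Real.pi * (1 + Real.pi / (2 * e)))
  have hpi := Real.pi_pos
  refine ⟨n * 4, fun h S T hh hS hST hT => ?_⟩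
  have hT0 : 0 < T := lt_of_lt_of_le (by positivity) hT
  have hz : 0 < h / S := by positivity
  have hbern : Real.log (1 + n * (h / S)) ≤ n * Real.log (1 + h / S) := by
    rw [← Real.log_pow]
    exact Real.log_le_log (by positivity) (one_add_mul_le_pow (by linarith) n)
  have hm := log_one_add_le_maj hh hS
  have hnn : (0 : ℝ) ≤ n := n.cast_nonneg
  have key : |Real.log S - Real.log T| ≤ Real.log (1 + n * (h / S)) := by
    rw [abs_le] at hST
    have hn1 : Real.pi ≤ n := by
      refine le_trans ?_ hn
      have : 0 ≤ Real.pi * (Real.pi / (2 * e)) := by positivity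
      linarith
    rw [abs_le', neg_sub, ← Real.log_div hS.ne' hT0.ne', ← Real.log_div hT0.ne' hS.ne']
    refine ⟨Real.log_le_log (by positivity) ?_, Real.log_le_log (by positivity) ?_⟩
    · have hS2 : S ≤ (1 + Real.pi / (2 * e)) * T := by
        have : Real.pi * h ≤ Real.pi / (2 * e) * T := by
          calc Real.pi * h = Real.pi / (2 * e) * (2 * e * h) := by field_simp
            _ ≤ _ := by gcongr
        linarith
      have : Real.pi * h / T ≤ n * (h / S) := by
        rw [div_le_iff₀ hT0]
        calc Real.pi * h = Real.pi * h * S / S := by field_simp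
          _ ≤ Real.pi * h * ((1 + Real.pi / (2 * e)) * T) / S := by gcongr
          _ = Real.pi * (1 + Real.pi / (2 * e)) * (h / S) * T := by ring
          _ ≤ n * (h / S) * T := by gcongr
      calc S / T ≤ (T + Real.pi * h) / T := by gcongr; linarith
        _ = 1 + Real.pi * h / T := by field_simp
        _ ≤ _ := by linarith
    · calc T / S ≤ (S + n * h) / S := by
            gcongr
            nlinarith
        _ = _ := by field_simp
  push_cast
  calc _ ≤ _ := key
    _ ≤ _ := hbern
    _ ≤ n * (4 * maj h S) := by gcongr
    _ = _ := by ring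

/-! ### Integral of the squared majorant -/

/-- The square of the majorant is `h² x^{-1/2} (x+h)^{-3/2}`, with primitive `2 h √(x / (x + h))`. -/
lemma maj_sq_integral {h : ℝ} (hh : 0 < h) :
    IntervalIntegrable (fun x => maj h x ^ 2) volume 0 1 ∧
      ∫ x in (0:ℝ)..1, maj h x ^ 2 ≤ 2 * h := by
  have hc : ContinuousOn (fun x => 2 * h * √(x / (x + h))) (Icc 0 1) := by
    refine continuousOn_const.mul (ContinuousOn.sqrt (continuousOn_id.div (by fun_prop) ?_))
    intro x hx; simp only [mem_Icc] at hx ⊢; linarith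
  have hd : ∀ x ∈ Ioo (0:ℝ) 1,
      HasDerivAt (fun x => 2 * h * √(x / (x + h))) (maj h x ^ 2) x := by
    intro x hx
    have hx0 := hx.1
    have hxh : 0 < x + h := by linarith
    have := (((hasDerivAt_id x).div ((hasDerivAt_id x).add_const h) hxh.ne').sqrt
      (div_pos hx0 hxh).ne').const_mul (2 * h)
    refine this.congr_deriv ?_
    simp only [id, Pi.div_apply]
    rw [maj_sq, Real.sqrt_div hx0.le]
    have ha : 0 < √x := by positivity
    have hb : 0 < √(x + h) := by positivity
    have hb2 := Real.sq_sqrt hxh.le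
    have e : (1 * (x + h) - x * 1) = h := by ring
    rw [e, ← hb2]
    rw [hb2]
    generalize √x = a at *
    generalize √(x + h) = b at *
    rw [← hb2]
    field_simp
  have hi : IntervalIntegrable (fun x => maj h x ^ 2) volume 0 1 := by
    apply intervalIntegral.intervalIntegrable_deriv_of_nonneg
      (g := fun x => 2 * h * √(x / (x + h)))
    · rwa [uIcc_of_le zero_le_one]
    · simpa using hd
    · intros; positivity
  refine ⟨hi, ?_⟩
  rw [intervalIntegral.integral_eq_sub_of_hasDerivAt_of_le zero_le_one hc hd hi]
  have : √(1 / (1 + h)) ≤ 1 := Real.sqrt_le_one.2 (by rw [div_le_one (by positivity)]; linarith)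
  simp only [zero_div, Real.sqrt_zero, mul_zero, sub_zero]
  nlinarith

lemma maj_sq_anti {h x S : ℝ} (hh : 0 < h) (hx : 0 < x) (hxS : x ≤ S) :
    maj h S ^ 2 ≤ maj h x ^ 2 := by
  rw [maj_sq, maj_sq]; gcongr

lemma le_sin_pi {x : ℝ} (hx : 0 ≤ x) (hx' : x ≤ 1 / 2) : x ≤ |Real.sin (Real.pi * x)| := by
  have hpi := Real.pi_pos
  have := Real.mul_le_sin (x := Real.pi * x) (by positivity) (by nlinarith)
  have e : 2 / Real.pi * (Real.pi * x) = 2 * x := by field_simp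
  rw [e] at this
  exact le_trans (by linarith) (this.trans (le_abs_self _))

lemma measurable_maj (h : ℝ) : Measurable (maj h) := by
  unfold maj; fun_prop

lemma maj_sin_periodic (h : ℝ) :
    Function.Periodic (fun x => maj h |Real.sin (Real.pi * x)| ^ 2) 1 := by
  intro x
  simp only [mul_add, mul_one, Real.sin_add_pi, abs_neg]

lemma maj_sin_integral {h : ℝ} (hh : 0 < h) :
    IntervalIntegrable (fun x => maj h |Real.sin (Real.pi * x)| ^ 2) volume 0 1 ∧
      ∫ x in (0:ℝ)..1, maj h |Real.sin (Real.pi * x)| ^ 2 ≤ 4 * h := by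
  obtain ⟨hi, hle⟩ := maj_sq_integral hh
  have hi' : IntervalIntegrable (fun x => maj h (1 - x) ^ 2) volume 0 1 := by
    have := (hi.comp_sub_left 1).symm
    simpa using this
  have he : ∫ x in (0:ℝ)..1, maj h (1 - x) ^ 2 = ∫ x in (0:ℝ)..1, maj h x ^ 2 := by
    rw [intervalIntegral.integral_comp_sub_left (fun x => maj h x ^ 2)]; simp
  have hb : ∀ x ∈ Ioo (0:ℝ) 1, maj h |Real.sin (Real.pi * x)| ^ 2 ≤
      maj h x ^ 2 + maj h (1 - x) ^ 2 := by
    intro x hx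
    rcases le_total x (1 / 2) with h1 | h1
    · have := maj_sq_anti hh hx.1 (le_sin_pi hx.1.le h1)
      nlinarith [sq_nonneg (maj h (1 - x))]
    · have h2 := le_sin_pi (x := 1 - x) (by linarith [hx.2]) (by linarith)
      rw [mul_sub, mul_one, Real.sin_pi_sub] at h2
      have := maj_sq_anti hh (by linarith [hx.2]) h2
      nlinarith [sq_nonneg (maj h x)]
  have hae : ∀ᵐ x ∂(volume.restrict (Ioc (0:ℝ) 1)), maj h |Real.sin (Real.pi * x)| ^ 2 ≤
      maj h x ^ 2 + maj h (1 - x) ^ 2 := by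
    rw [← restrict_Ioo_eq_restrict_Ioc]
    exact ae_restrict_of_forall_mem measurableSet_Ioo hb
  have hmeas : Measurable (fun x => maj h |Real.sin (Real.pi * x)| ^ 2) := by
    have := measurable_maj h
    fun_prop
  have hi2 : IntervalIntegrable (fun x => maj h |Real.sin (Real.pi * x)| ^ 2) volume 0 1 := by
    refine (hi.add hi').mono_fun hmeas.aestronglyMeasurable ?_
    rw [uIoc_of_le zero_le_one]
    filter_upwards [hae] with x hx
    rw [Real.norm_of_nonneg (by positivity)]
    exact hx.trans (le_abs_self _)
  refine ⟨hi2, ?_⟩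
  have := intervalIntegral.integral_mono_ae_restrict zero_le_one hi2 (hi.add hi')
    (by rw [← restrict_Ioo_eq_restrict_Icc]
        exact ae_restrict_of_forall_mem measurableSet_Ioo hb)
  rw [intervalIntegral.integral_add hi hi', he] at this
  linarith

/-- By periodicity the inner integral over `t` does not depend on `s`. -/
lemma maj_sin_shift {h : ℝ} (hh : 0 < h) (s : ℝ) :
    IntervalIntegrable (fun t => maj h |Real.sin (Real.pi * (s - t))| ^ 2) volume 0 1 ∧
      ∫ t in (0:ℝ)..1, maj h |Real.sin (Real.pi * (s - t))| ^ 2 =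
        ∫ x in (0:ℝ)..1, maj h |Real.sin (Real.pi * x)| ^ 2 := by
  have hper := maj_sin_periodic h
  constructor
  · have h1 := hper.intervalIntegrable (t := 0) one_ne_zero
      (by simpa using (maj_sin_integral hh).1) s (s - 1)
    have h2 := h1.comp_sub_left s
    simpa using h2
  · rw [intervalIntegral.integral_comp_sub_left
      (fun x => maj h |Real.sin (Real.pi * x)| ^ 2) s]
    have := hper.intervalIntegral_add_eq (s - 1) 0
    simpa using this

/-! ### Step functions -/

/-- A step function integrates to the mean of its coefficients: rescale to the grid `ℤ` and shift by
periodicity to `[0, N]`. -/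
lemma integral_step {E : Type*} [NormedAddCommGroup E] [NormedSpace ℝ E] [CompleteSpace E]
    (N : ℕ) [NeZero N] (ε : ℝ) (v : ZMod N → E) :
    ∫ s in (0:ℝ)..1, v ((⌊s * N + 1 / 2 - ε⌋ : ℤ) : ZMod N) = (1 / (N : ℝ)) • ∑ i, v i := by
  have hN : (N : ℝ) ≠ 0 := NeZero.ne _
  set w : ℝ → E := fun u => v ((⌊u⌋ : ℤ) : ZMod N) with hw
  have hper : Function.Periodic w N := by
    intro u
    simp [hw, Int.floor_add_natCast]
  have hcell : ∀ k : ℕ, EqOn w (fun _ => v (k : ZMod N)) (Ioo (k : ℝ) ((k + 1 : ℕ) : ℝ)) := by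
    intro k u hu
    have : ⌊u⌋ = (k : ℤ) := by
      rw [Int.floor_eq_iff]
      refine ⟨by simpa using hu.1.le, by simpa using hu.2⟩
    simp [hw, this]
  have hae : ∀ k : ℕ, ∀ᵐ u ∂volume.restrict (Ioc (k : ℝ) ((k + 1 : ℕ) : ℝ)),
      v (k : ZMod N) = w u := by
    intro k
    rw [← restrict_Ioo_eq_restrict_Ioc]
    exact ae_restrict_of_forall_mem measurableSet_Ioo fun u hu => (hcell k hu).symm
  have hle : ∀ k : ℕ, (k : ℝ) ≤ ((k + 1 : ℕ) : ℝ) := fun k => by push_cast; linarith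
  have hint : ∀ k < N, IntervalIntegrable w volume ((k : ℕ) : ℝ) ((k + 1 : ℕ) : ℝ) := by
    intro k _
    refine (intervalIntegrable_const (c := v (k : ZMod N))).congr_ae ?_
    rw [uIoc_of_le (hle k)]
    exact hae k
  have hsum := intervalIntegral.sum_integral_adjacent_intervals
    (f := w) (μ := volume) (a := fun k : ℕ => (k : ℝ)) (n := N) hint
  have hval : ∀ k : ℕ, ∫ x in (k : ℝ)..((k + 1 : ℕ) : ℝ), w x = v (k : ZMod N) := by
    intro k
    have : ∫ x in (k : ℝ)..((k + 1 : ℕ) : ℝ), w x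
        = ∫ x in (k : ℝ)..((k + 1 : ℕ) : ℝ), v (k : ZMod N) := by
      refine intervalIntegral.integral_congr_ae_restrict ?_
      rw [uIoc_of_le (hle k)]
      exact (hae k).mono fun _ h => h.symm
    rw [this]; simp
  have hfin : ∑ k ∈ Finset.range N, v (k : ZMod N) = ∑ i, v i := by
    refine Finset.sum_bij' (fun k _ => (k : ZMod N)) (fun i _ => i.val) ?_ ?_ ?_ ?_ ?_
    · simp
    · intro i _; simpa using ZMod.val_lt i
    · intro k hk; exact ZMod.val_cast_of_lt (Finset.mem_range.1 hk)
    · intro i _; simp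
    · simp
  have h1 := intervalIntegral.integral_comp_mul_add (a := 0) (b := 1) w hN (1 / 2 - ε)
  have h2 : ∀ s : ℝ, w (N * s + (1 / 2 - ε)) = v ((⌊s * N + 1 / 2 - ε⌋ : ℤ) : ZMod N) := by
    intro s; simp only [hw]; congr 3; ring
  simp only [h2] at h1
  rw [h1, ← hfin]
  have h3 := hper.intervalIntegral_add_eq (1 / 2 - ε) 0
  have e : (N : ℝ) * 1 + (1 / 2 - ε) = 1 / 2 - ε + N := by ring
  simp only [hval, Nat.cast_zero] at hsum
  rw [e, mul_zero, zero_add, h3, zero_add, hsum, one_div]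

lemma measurable_cell (N : ℕ) (ε : ℝ) :
    Measurable (fun s : ℝ => (⌊s * N + 1 / 2 - ε⌋ : ℤ)) :=
  Int.measurable_floor.comp (by fun_prop)

lemma measurable_stepf (N : ℕ) (ε : ℝ) (v : ZMod N → ℂ) : Measurable (stepf N ε v) :=
  (Measurable.of_discrete (f := fun n : ℤ => v (n : ZMod N))).comp (measurable_cell N ε)

lemma stepf_bound (N : ℕ) [NeZero N] (ε : ℝ) (v : ZMod N → ℂ) (s : ℝ) :
    ‖stepf N ε v s‖ ≤ ∑ i, ‖v i‖ :=
  Finset.single_le_sum (f := fun i => ‖v i‖) (fun _ _ => norm_nonneg _) (Finset.mem_univ _)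

/-! ### Pointwise estimate of the kernel difference -/

/-- Midpoint of the cell of the `ε`-shifted grid that contains `s`. -/
noncomputable def midp (N : ℕ) (ε s : ℝ) : ℝ := tg (1 / (N : ℝ)) ε ⌊s * N + 1 / 2 - ε⌋

lemma abs_sub_midp (N : ℕ) [NeZero N] (ε s : ℝ) : |s - midp N ε s| ≤ 1 / (2 * N) := by
  have hN : (0 : ℝ) < N := by exact_mod_cast NeZero.pos N
  have h1 := Int.floor_le (s * N + 1 / 2 - ε)
  have h2 := Int.lt_floor_add_one (s * N + 1 / 2 - ε)
  have e : s - midp N ε s = (s * N + 1 / 2 - ε - ⌊s * N + 1 / 2 - ε⌋ - 1 / 2) / N := by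
    unfold midp tg; field_simp; ring
  rw [e, abs_div, abs_of_pos hN, ← div_div]
  gcongr
  rw [abs_le]; constructor <;> linarith

lemma logKer_add_int {A K : ℝ → ℝ → ℂ} (hA : SPK A) (hK : SPK K) (s t : ℝ) (m n : ℤ) :
    logKer A K (s - m) (t - n) = logKer A K s t := by
  have hper : ∀ B : ℝ → ℝ → ℂ, SPK B → B (s - m) (t - n) = B s t := by
    intro B hB
    have h1 : Function.Periodic (fun x => B x (t - n)) 1 := fun x => hB.2.1 x _
    have h2 : Function.Periodic (fun x => B s x) 1 := fun x => hB.2.2 s x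
    have h3 := h1.sub_int_mul_eq (x := s) m
    have h4 := h2.sub_int_mul_eq (x := t) n
    simp only [mul_one] at h3 h4
    rw [h3, h4]
  have hsin : Real.sin (Real.pi * (s - m - (t - n))) ^ 2 = Real.sin (Real.pi * (s - t)) ^ 2 := by
    have e : Real.pi * (s - m - (t - n)) = Real.pi * (s - t) - ((m - n : ℤ) : ℝ) * Real.pi := by
      push_cast; ring
    rw [e, Real.sin_sub_int_mul_pi, ← sq_abs, abs_mul, abs_zpow]
    simp
  unfold logKer
  rw [hper A hA, hper K hK, hsin]

/-- Sampling at the representatives `i.val`, `j.val` is sampling at the cell midpoints, up to integer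
shifts, which the kernel does not see. -/
lemma logKer_midp {A K : ℝ → ℝ → ℂ} (hA : SPK A) (hK : SPK K) (N : ℕ) [NeZero N] (ε s t : ℝ) :
    logKer A K
        (tg (1 / (N : ℝ)) ε (((⌊s * N + 1 / 2 - ε⌋ : ℤ) : ZMod N).val : ℤ))
        (tg (1 / (N : ℝ)) 0 (((⌊t * N + 1 / 2 - 0⌋ : ℤ) : ZMod N).val : ℤ)) =
      logKer A K (midp N ε s) (midp N 0 t) := by
  have hN : (N : ℝ) ≠ 0 := NeZero.ne _
  have key : ∀ (e : ℝ) (n : ℤ), tg (1 / (N : ℝ)) e (((n : ZMod N).val : ℕ) : ℤ) =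
      tg (1 / (N : ℝ)) e n - ((n / (N : ℤ) : ℤ) : ℝ) := by
    intro e n
    rw [ZMod.val_intCast]
    have : (n : ℝ) = (N : ℝ) * ((n / (N : ℤ) : ℤ) : ℝ) + ((n % (N : ℤ) : ℤ) : ℝ) := by
      exact_mod_cast (Int.mul_ediv_add_emod n N).symm
    unfold tg
    rw [this]
    field_simp
    ring
  rw [key, key, logKer_add_int hA hK]
  rfl

/-- A `SPK` function is bounded and Lipschitz near the unit square. -/
lemma SPK.bounds {A : ℝ → ℝ → ℂ} (hA : SPK A) : ∃ M : ℝ, 0 ≤ M ∧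
    (∀ s ∈ Icc (-1:ℝ) 2, ∀ t ∈ Icc (-1:ℝ) 2, ‖A s t‖ ≤ M) ∧
    ∀ δ, ∀ s ∈ Icc (-1:ℝ) 2, ∀ t ∈ Icc (-1:ℝ) 2, ∀ s' ∈ Icc (-1:ℝ) 2, ∀ t' ∈ Icc (-1:ℝ) 2,
      |s - s'| ≤ δ → |t - t'| ≤ δ → ‖A s t - A s' t'‖ ≤ M * δ := by
  have hcomp : IsCompact (Icc (-1:ℝ) 2 ×ˢ Icc (-1:ℝ) 2) := isCompact_Icc.prod isCompact_Icc
  have hconv : Convex ℝ (Icc (-1:ℝ) 2 ×ˢ Icc (-1:ℝ) 2) := (convex_Icc _ _).prod (convex_Icc _ _)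
  obtain ⟨L, hL⟩ := hA.1.contDiffOn.exists_lipschitzOnWith (by simp) hconv hcomp
  obtain ⟨B, hB⟩ := hcomp.exists_bound_of_continuousOn hA.1.continuous.continuousOn
  refine ⟨max L B, le_max_of_le_left L.2, fun s hs t ht => ?_, ?_⟩
  · exact (hB (s, t) ⟨hs, ht⟩).trans (le_max_right _ _)
  · intro δ s hs t ht s' hs' t' ht' h1 h2
    have := hL.dist_le_mul (s, t) ⟨hs, ht⟩ (s', t') ⟨hs', ht'⟩
    rw [dist_eq_norm] at this
    refine this.trans ?_
    have h3 : dist (s, t) (s', t') ≤ δ := by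
      rw [Prod.dist_eq]; exact max_le h1 h2
    have hδ : 0 ≤ δ := dist_nonneg.trans h3
    gcongr
    exact le_max_left _ _

/-- The nodes of the two grids never meet: their distance on the circle is at least `|ε| / N`. -/
lemma sin_midp_lower {ε : ℝ} (hε : |ε| ≤ 1 / 2) (N : ℕ) [NeZero N] (s t : ℝ) :
    2 * |ε| * (1 / N) ≤ |Real.sin (Real.pi * (midp N ε s - midp N 0 t))| := by
  have hN : (0 : ℝ) < N := by exact_mod_cast NeZero.pos N
  have hpi := Real.pi_pos
  set k : ℤ := ⌊s * N + 1 / 2 - ε⌋ - ⌊t * N + 1 / 2 - 0⌋ with hk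
  set y := midp N ε s - midp N 0 t with hy
  have hyk : y = (k + ε) / N := by
    rw [hy, hk]; unfold midp tg; push_cast; ring
  have hr := abs_sub_round y
  set m := round y
  have e : Real.pi * y = Real.pi * (y - m) + m * Real.pi := by ring
  have hs : |Real.sin (Real.pi * y)| = |Real.sin (Real.pi * (y - m))| := by
    rw [e, Real.sin_add_int_mul_pi, abs_mul, abs_zpow]; simp
  rw [hs]
  have h1 := Real.mul_abs_le_abs_sin (x := Real.pi * (y - m))
    (by rw [abs_mul, abs_of_pos hpi]; nlinarith)
  refine le_trans ?_ h1
  rw [abs_mul, abs_of_pos hpi]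
  have e2 : 2 / Real.pi * (Real.pi * |y - m|) = 2 * |y - m| := by field_simp
  rw [e2]
  have e3 : y - m = (((k - m * N : ℤ) : ℝ) + ε) / N := by
    rw [hyk]; push_cast; field_simp; ring
  have h4 : |ε| ≤ |((k - m * N : ℤ) : ℝ) + ε| := by
    generalize k - m * N = j
    rcases eq_or_ne j 0 with rfl | hj
    · simp
    · have : (1 : ℝ) ≤ |(j : ℝ)| := by exact_mod_cast Int.one_le_abs hj
      have := abs_sub_abs_le_abs_sub (j : ℝ) (-ε)
      rw [abs_neg, sub_neg_eq_add] at this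
      linarith
  rw [e3, abs_div, abs_of_pos hN, mul_assoc, mul_one_div]
  gcongr

/-- Replacing the arguments of the kernel by cell midpoints costs at most a multiple of `maj`.  The
oscillation of the logarithm is handled by `log_sub_log_le`; the smooth factors vary by `O(h)`, and
both `h` and `h |log S|` are themselves bounded by `maj`. -/
lemma kernel_diff {A K : ℝ → ℝ → ℂ} (hA : SPK A) (hK : SPK K) {ε : ℝ} (hε : |ε| ≤ 1 / 2)
    (hε0 : ε ≠ 0) : ∃ C : ℝ, 0 < C ∧ ∀ (N : ℕ) [NeZero N], ∀ s ∈ Icc (0:ℝ) 1, ∀ t ∈ Icc (0:ℝ) 1,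
      Real.sin (Real.pi * (s - t)) ≠ 0 →
      ‖logKer A K s t - logKer A K (midp N ε s) (midp N 0 t)‖ ≤
        C * maj (1 / N) |Real.sin (Real.pi * (s - t))| := by
  obtain ⟨MA, hMA, hA1, hA2⟩ := hA.bounds
  obtain ⟨MK, hMK, hK1, hK2⟩ := hK.bounds
  obtain ⟨n, hn⟩ := log_sub_log_le (abs_pos.2 hε0)
  refine ⟨MA * (64 + 2 * n) + MK * 8 + 1, by positivity, fun N _ s hs t ht hsin => ?_⟩
  have hpi := Real.pi_pos
  have hN : (0 : ℝ) < N := by exact_mod_cast NeZero.pos N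
  have hN1 : (1 : ℝ) ≤ N := by exact_mod_cast NeZero.one_le
  have hh : (0:ℝ) < 1 / N := by positivity
  have hh1 : (1:ℝ) / N ≤ 1 := by rw [div_le_one hN]; exact hN1
  have hd : (1:ℝ) / (2 * N) = (1 / N) / 2 := by field_simp
  have h1 := abs_sub_midp N ε s
  have h2 := abs_sub_midp N 0 t
  rw [hd] at h1 h2
  have hlow := sin_midp_lower hε N s t
  have hmem : ∀ x ∈ Icc (0:ℝ) 1, ∀ x', |x - x'| ≤ (1 / N : ℝ) / 2 → x' ∈ Icc (-1:ℝ) 2 := by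
    intro x hx x' hxx
    rw [abs_le] at hxx
    exact ⟨by linarith [hx.1], by linarith [hx.2]⟩
  have hps := hmem s hs _ h1
  have hpt := hmem t ht _ h2
  have hs' : s ∈ Icc (-1:ℝ) 2 := ⟨by linarith [hs.1], by linarith [hs.2]⟩
  have ht' : t ∈ Icc (-1:ℝ) 2 := ⟨by linarith [ht.1], by linarith [ht.2]⟩
  unfold logKer
  set p := midp N ε s
  set q := midp N 0 t
  set h : ℝ := 1 / N
  have hS1 : |Real.sin (Real.pi * (s - t))| ≤ 1 := Real.abs_sin_le_one _
  have hS0 : 0 < |Real.sin (Real.pi * (s - t))| := abs_pos.2 hsin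
  have hST : |(|Real.sin (Real.pi * (s - t))| - |Real.sin (Real.pi * (p - q))|)| ≤
      Real.pi * h := by
    refine (abs_abs_sub_abs_le_abs_sub _ _).trans ((Real.abs_sin_sub_sin_le _ _).trans ?_)
    rw [← mul_sub, abs_mul, abs_of_pos hpi]
    gcongr
    have : s - t - (p - q) = (s - p) - (t - q) := by ring
    rw [this]
    refine (abs_sub _ _).trans ?_
    linarith
  rw [← sq_abs (Real.sin (Real.pi * (s - t))), ← sq_abs (Real.sin (Real.pi * (p - q)))]
  set S := |Real.sin (Real.pi * (s - t))|
  set T := |Real.sin (Real.pi * (p - q))|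
  have hlog := hn h S T hh hS0 hST hlow
  have hm0 : 0 ≤ maj h S := maj_nonneg hh.le
  have hl1 := mul_log_le_maj hh hh1 hS0 hS1
  have hl2 := le_maj hh hh1 hS0 hS1
  have hAd := hA2 h s hs' t ht' p hps q hpt (by linarith) (by linarith)
  have hKd := hK2 h s hs' t ht' p hps q hpt (by linarith) (by linarith)
  have hAb := hA1 p hps q hpt
  rw [Real.log_pow, Real.log_pow]
  have hc : ‖Complex.I / (2 * Real.pi : ℂ)‖ ≤ 1 := by
    rw [norm_div, Complex.norm_I]
    have : ‖(2 * Real.pi : ℂ)‖ = 2 * Real.pi := by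
      rw [norm_mul, Complex.norm_real, Real.norm_of_nonneg hpi.le]; simp
    rw [this, div_le_one (by positivity)]
    linarith [Real.pi_gt_three]
  set c := Complex.I / (2 * Real.pi : ℂ)
  set a := A s t
  set b := A p q
  have e : c * a * ((((2 : ℕ) : ℝ) * Real.log S : ℝ) : ℂ) + K s t -
      (c * b * ((((2 : ℕ) : ℝ) * Real.log T : ℝ) : ℂ) + K p q) =
      c * ((a - b) * ((2 * Real.log S : ℝ) : ℂ)
        + b * ((2 * (Real.log S - Real.log T) : ℝ) : ℂ)) + (K s t - K p q) := by
    push_cast; ring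
  rw [e]
  refine (norm_add_le _ _).trans ?_
  have hX : ‖(a - b) * ((2 * Real.log S : ℝ) : ℂ)
        + b * ((2 * (Real.log S - Real.log T) : ℝ) : ℂ)‖ ≤ MA * (64 + 2 * n) * maj h S := by
    refine (norm_add_le _ _).trans ?_
    rw [norm_mul, norm_mul, Complex.norm_real, Complex.norm_real, Real.norm_eq_abs,
      Real.norm_eq_abs, abs_mul, abs_mul, abs_two]
    calc _ ≤ MA * h * (2 * |Real.log S|) + MA * (2 * (n * maj h S)) := by gcongr
      _ = 2 * MA * (h * |Real.log S|) + MA * (2 * (n * maj h S)) := by ring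
      _ ≤ 2 * MA * (32 * maj h S) + MA * (2 * (n * maj h S)) := by gcongr
      _ = _ := by ring
  have hX' : ‖c * ((a - b) * ((2 * Real.log S : ℝ) : ℂ)
        + b * ((2 * (Real.log S - Real.log T) : ℝ) : ℂ))‖ ≤ MA * (64 + 2 * n) * maj h S := by
    rw [norm_mul]
    calc _ ≤ 1 * (MA * (64 + 2 * n) * maj h S) := by gcongr
      _ = _ := one_mul _
  have hK3 : MK * h ≤ MK * (8 * maj h S) := by gcongr
  have : (MA * (64 + 2 * n) + MK * 8 + 1) * maj h S =
    MA * (64 + 2 * n) * maj h S + MK * (8 * maj h S) + maj h S := by ring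
  linarith

/-! ### Integration over the unit square -/

/-- Lebesgue measure on the unit interval. -/
noncomputable abbrev unitMeas : Measure ℝ := volume.restrict (Ioc (0:ℝ) 1)

lemma integral_mul_le_sqrt {α : Type*} [MeasurableSpace α] {μ : Measure α} {f g : α → ℝ}
    (hf0 : ∀ x, 0 ≤ f x) (hg0 : ∀ x, 0 ≤ g x) (hfm : AEStronglyMeasurable f μ)
    (hgm : AEStronglyMeasurable g μ) (hf : Integrable (fun x => f x ^ 2) μ)
    (hg : Integrable (fun x => g x ^ 2) μ) :
    ∫ x, f x * g x ∂μ ≤ √(∫ x, f x ^ 2 ∂μ) * √(∫ x, g x ^ 2 ∂μ) := by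
  have := integral_mul_le_Lp_mul_Lq_of_nonneg (μ := μ) (p := 2) (q := 2) Real.HolderConjugate.two_two
    (Filter.Eventually.of_forall hf0) (Filter.Eventually.of_forall hg0)
    (by simpa using (memLp_two_iff_integrable_sq hfm).2 hf)
    (by simpa using (memLp_two_iff_integrable_sq hgm).2 hg)
  simpa [Real.sqrt_eq_rpow] using this

lemma measurable_maj_sin (h : ℝ) :
    Measurable (fun p : ℝ × ℝ => maj h |Real.sin (Real.pi * (p.1 - p.2))|) := by
  have := measurable_maj h
  fun_prop

lemma maj_sin_prod {h : ℝ} (hh : 0 < h) :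
    Integrable (fun p : ℝ × ℝ => maj h |Real.sin (Real.pi * (p.1 - p.2))| ^ 2)
      (unitMeas.prod unitMeas) ∧
    ∫ p : ℝ × ℝ, maj h |Real.sin (Real.pi * (p.1 - p.2))| ^ 2 ∂(unitMeas.prod unitMeas)
      ≤ 4 * h := by
  have hval : ∀ s : ℝ, ∫ t, maj h |Real.sin (Real.pi * (s - t))| ^ 2 ∂unitMeas =
      ∫ x in (0:ℝ)..1, maj h |Real.sin (Real.pi * x)| ^ 2 := by
    intro s
    rw [← (maj_sin_shift hh s).2, intervalIntegral.integral_of_le zero_le_one]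
  have hi : Integrable (fun p : ℝ × ℝ => maj h |Real.sin (Real.pi * (p.1 - p.2))| ^ 2)
      (unitMeas.prod unitMeas) := by
    rw [integrable_prod_iff ((measurable_maj_sin h).pow_const 2).aestronglyMeasurable]
    refine ⟨Filter.Eventually.of_forall fun s => ?_, ?_⟩
    · have := (maj_sin_shift hh s).1
      rwa [intervalIntegrable_iff_integrableOn_Ioc_of_le zero_le_one] at this
    · simp only [norm_pow, Real.norm_eq_abs, sq_abs]
      simp only [hval]
      exact integrable_const _
  refine ⟨hi, ?_⟩
  rw [integral_prod _ hi]
  simp only [hval]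
  simpa using (maj_sin_integral hh).2

lemma ae_sin_ne_zero : ∀ᵐ p ∂(unitMeas.prod unitMeas),
    Real.sin (Real.pi * (p.1 - p.2)) ≠ 0 := by
  have hm : MeasurableSet {p : ℝ × ℝ | Real.sin (Real.pi * (p.1 - p.2)) ≠ 0} :=
    (measurableSet_singleton (0:ℝ)).compl.preimage
      (f := fun p : ℝ × ℝ => Real.sin (Real.pi * (p.1 - p.2))) (by fun_prop)
  refine (Measure.ae_prod_iff_ae_ae hm).2 (Filter.Eventually.of_forall fun s => ?_)
  have hc : {t : ℝ | Real.sin (Real.pi * (s - t)) = 0}.Countable := by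
    refine (countable_range (fun n : ℤ => s - n)).mono fun t ht => ?_
    obtain ⟨n, hn⟩ := Real.sin_eq_zero_iff.1 ht
    refine ⟨n, ?_⟩
    have : (n : ℝ) = s - t := by
      have hpi := Real.pi_ne_zero
      rw [mul_comm] at hn
      exact mul_left_cancel₀ hpi hn
    simp [this]
  filter_upwards [(hc.ae_notMem _)] with t ht using ht

lemma measurable_logKer {A K : ℝ → ℝ → ℂ} (hA : SPK A) (hK : SPK K) :
    Measurable (fun p : ℝ × ℝ => logKer A K p.1 p.2) := by
  have h1 := hA.1.continuous.measurable
  have h2 := hK.1.continuous.measurable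
  unfold logKer
  refine ((measurable_const.mul h1).mul ?_).add h2
  exact Complex.measurable_ofReal.comp (Real.measurable_log.comp (by fun_prop))

/-- quadrature perturbation bound `≤ C_ε h^{1/2} ‖ψ_h‖₀ ‖φ_h‖₀`. -/
theorem stmt_6
    (A2 K2 : ℝ → ℝ → ℂ) (hA2 : SPK A2) (hK2 : SPK K2)
    (ε : ℝ) (hε1 : ε ∈ Set.Icc (-(1:ℝ)/2) (1/2)) (hε0 : ε ≠ 0) :
    ∃ C > (0:ℝ), ∀ (N : ℕ) [NeZero N], 2 ≤ N → ∀ ψ φv : ZMod N → ℂ,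
      ‖(∫ s in (0:ℝ)..1, ∫ t in (0:ℝ)..1,
            stepf N ε ψ s * logKer A2 K2 s t * stepf N 0 φv t)
          - (1 / (N : ℂ)) ^ 2 * ∑ i : ZMod N, ∑ j : ZMod N,
              ψ i * logKer A2 K2 (tg (1 / (N : ℝ)) ε ((i.val : ℕ) : ℤ))
                  (tg (1 / (N : ℝ)) 0 ((j.val : ℕ) : ℤ)) * φv j‖ ≤
        C * Real.sqrt (1 / (N : ℝ))
          * Real.sqrt ((1 / (N : ℝ)) * ∑ i : ZMod N, ‖ψ i‖ ^ 2)
          * Real.sqrt ((1 / (N : ℝ)) * ∑ j : ZMod N, ‖φv j‖ ^ 2) := by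
  have hε : |ε| ≤ 1 / 2 := abs_le.2 ⟨by linarith [hε1.1], hε1.2⟩
  obtain ⟨C, hC, hker⟩ := kernel_diff hA2 hK2 hε hε0
  refine ⟨C * 2, by positivity, fun N _ _ ψ φv => ?_⟩
  have hN : (0 : ℝ) < N := by exact_mod_cast NeZero.pos N
  have hh : (0:ℝ) < 1 / N := by positivity
  set h : ℝ := 1 / N with hh_def
  set π2 := unitMeas.prod unitMeas with hπ2
  let M : ℝ × ℝ → ℝ := fun p => maj h |Real.sin (Real.pi * (p.1 - p.2))|
  -- the coefficients of the discretized kernel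
  let g : ZMod N → ZMod N → ℂ := fun i j =>
    ψ i * logKer A2 K2 (tg h ε ((i.val : ℕ) : ℤ)) (tg h 0 ((j.val : ℕ) : ℤ)) * φv j
  let F : ℝ × ℝ → ℂ := fun p => stepf N ε ψ p.1 * logKer A2 K2 p.1 p.2 * stepf N 0 φv p.2
  let B : ℝ × ℝ → ℂ := fun p =>
    g ((⌊p.1 * N + 1 / 2 - ε⌋ : ℤ) : ZMod N) ((⌊p.2 * N + 1 / 2 - 0⌋ : ℤ) : ZMod N)
  let D : ℝ × ℝ → ℝ := fun p => ‖stepf N ε ψ p.1‖ * ‖stepf N 0 φv p.2‖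
  have hM0 : ∀ p, 0 ≤ M p := fun p => maj_nonneg hh.le
  have hD0 : ∀ p, 0 ≤ D p := fun p => by positivity
  have hMm : Measurable M := measurable_maj_sin h
  have hψm := measurable_stepf N ε ψ
  have hφm := measurable_stepf N 0 φv
  have hDm : Measurable D := (hψm.comp measurable_fst).norm.mul (hφm.comp measurable_snd).norm
  have hFm : Measurable F :=
    ((hψm.comp measurable_fst).mul (measurable_logKer hA2 hK2)).mul (hφm.comp measurable_snd)
  have hBm : Measurable B :=
    (Measurable.of_discrete (f := fun n : ℤ × ℤ => g (n.1 : ZMod N) (n.2 : ZMod N))).comp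
      (((measurable_cell N ε).comp measurable_fst).prodMk
        ((measurable_cell N 0).comp measurable_snd))
  obtain ⟨hM2, hM2le⟩ := maj_sin_prod hh
  have hDb : ∀ p, D p ≤ (∑ i, ‖ψ i‖) * ∑ i, ‖φv i‖ := fun p =>
    mul_le_mul (stepf_bound N ε ψ _) (stepf_bound N 0 φv _) (norm_nonneg _) (by positivity)
  have hD2 : Integrable (fun p => D p ^ 2) π2 := by
    refine Integrable.of_bound (hDm.pow_const 2).aestronglyMeasurable
      (((∑ i, ‖ψ i‖) * ∑ i, ‖φv i‖) ^ 2) (Filter.Eventually.of_forall fun p => ?_)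
    rw [Real.norm_of_nonneg (by positivity)]
    exact pow_le_pow_left₀ (hD0 p) (hDb p) 2
  have hDM : Integrable (fun p => D p * M p) π2 := by
    refine (hD2.add hM2).mono' (hDm.mul hMm).aestronglyMeasurable
      (Filter.Eventually.of_forall fun p => ?_)
    rw [Real.norm_of_nonneg (mul_nonneg (hD0 p) (hM0 p))]
    change D p * M p ≤ D p ^ 2 + M p ^ 2
    nlinarith [sq_nonneg (D p - M p), sq_nonneg (D p), sq_nonneg (M p)]
  have hBi : Integrable B π2 := by
    refine Integrable.of_bound hBm.aestronglyMeasurable (∑ i, ∑ j, ‖g i j‖)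
      (Filter.Eventually.of_forall fun p => ?_)
    refine le_trans ?_ (Finset.single_le_sum (f := fun i => ∑ j, ‖g i j‖)
      (fun _ _ => by positivity) (Finset.mem_univ ((⌊p.1 * N + 1 / 2 - ε⌋ : ℤ) : ZMod N)))
    exact Finset.single_le_sum (f := fun j => ‖g _ j‖)
      (fun _ _ => norm_nonneg _) (Finset.mem_univ _)
  have hmem : ∀ᵐ p ∂π2, p ∈ Ioc (0:ℝ) 1 ×ˢ Ioc (0:ℝ) 1 := by
    rw [hπ2, Measure.prod_restrict]
    exact ae_restrict_mem (measurableSet_Ioc.prod measurableSet_Ioc)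
  have hFB : ∀ᵐ p ∂π2, ‖F p - B p‖ ≤ C * (D p * M p) := by
    filter_upwards [hmem, ae_sin_ne_zero] with p hp hs
    have h1 := hker N p.1 (Ioc_subset_Icc_self hp.1) p.2 (Ioc_subset_Icc_self hp.2) hs
    have e : F p - B p = stepf N ε ψ p.1 * stepf N 0 φv p.2 *
        (logKer A2 K2 p.1 p.2 - logKer A2 K2 (midp N ε p.1) (midp N 0 p.2)) := by
      simp only [F, B, g]
      rw [hh_def, logKer_midp hA2 hK2]
      simp only [stepf]
      ring
    rw [e, norm_mul, norm_mul]
    calc _ ≤ D p * (C * M p) := mul_le_mul_of_nonneg_left h1 (hD0 p)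
      _ = _ := by ring
  have hFBi : Integrable (fun p => F p - B p) π2 :=
    (hDM.const_mul C).mono' (hFm.sub hBm).aestronglyMeasurable hFB
  have hFi : Integrable F π2 := by
    have := hFBi.add hBi
    exact this.congr (Filter.Eventually.of_forall fun p => sub_add_cancel (F p) (B p))
  have hF : (∫ s in (0:ℝ)..1, ∫ t in (0:ℝ)..1,
      stepf N ε ψ s * logKer A2 K2 s t * stepf N 0 φv t) = ∫ p, F p ∂π2 := by
    rw [integral_prod _ hFi]
    simp only [intervalIntegral.integral_of_le zero_le_one, F]
  have hB : (1 / (N : ℂ)) ^ 2 * ∑ i, ∑ j, g i j = ∫ p, B p ∂π2 := by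
    rw [integral_prod _ hBi]
    have h1 : ∀ i, ∫ t, g i ((⌊t * N + 1 / 2 - 0⌋ : ℤ) : ZMod N) ∂unitMeas =
        (1 / (N : ℝ)) • ∑ j, g i j := by
      intro i
      rw [← integral_step N 0 (fun j => g i j), intervalIntegral.integral_of_le zero_le_one]
    have h2 := integral_step N ε (fun i => (1 / (N : ℝ)) • ∑ j, g i j)
    rw [intervalIntegral.integral_of_le zero_le_one] at h2
    simp only [B, h1]
    rw [h2, ← Finset.smul_sum, smul_smul, Complex.real_smul]
    push_cast
    ring
  have hDsq : ∫ p, D p ^ 2 ∂π2 = (h * ∑ i, ‖ψ i‖ ^ 2) * (h * ∑ j, ‖φv j‖ ^ 2) := by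
    have h1 := integral_step N ε (fun i => ‖ψ i‖ ^ 2)
    have h2 := integral_step N 0 (fun i => ‖φv i‖ ^ 2)
    rw [intervalIntegral.integral_of_le zero_le_one, smul_eq_mul] at h1 h2
    rw [← h1, ← h2, ← integral_prod_mul]
    simp only [D, mul_pow, stepf]
    rfl
  have hCS := integral_mul_le_sqrt hD0 hM0 hDm.aestronglyMeasurable hMm.aestronglyMeasurable
    hD2 hM2
  have hsq : √(∫ p, M p ^ 2 ∂π2) ≤ 2 * √h := by
    calc √(∫ p, M p ^ 2 ∂π2) ≤ √(4 * h) := Real.sqrt_le_sqrt hM2le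
      _ = 2 * √h := by
        rw [Real.sqrt_mul (by norm_num), show (4:ℝ) = 2 ^ 2 by norm_num,
          Real.sqrt_sq (by norm_num)]
  change ‖_ - (1 / (N : ℂ)) ^ 2 * ∑ i, ∑ j, g i j‖ ≤ _
  rw [hF, hB, ← integral_sub hFi hBi]
  calc _ ≤ ∫ p, C * (D p * M p) ∂π2 := norm_integral_le_of_norm_le (hDM.const_mul C) hFB
    _ = C * ∫ p, D p * M p ∂π2 := integral_const_mul _ _
    _ ≤ C * (√(∫ p, D p ^ 2 ∂π2) * (2 * √h)) := by
        refine mul_le_mul_of_nonneg_left (hCS.trans ?_) hC.le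
        exact mul_le_mul_of_nonneg_left hsq (Real.sqrt_nonneg _)
    _ = _ := by
        rw [hDsq, Real.sqrt_mul (by positivity)]
        ring
end

section
/- For every positive integer N (h = 1/N, s_j = (j − 1/2)h) and every 1-periodic absolutely continuous function u : ℝ → ℂ with u′ ∈ L²(0,1), the midpoint Riemann sum satisfies | ∫₀¹ u(t) dt − h Σ_{j=0}^{N−1} u(s_j) | ≤ (h/2) ‖u′‖_{L²(0,1)} ≤ π h ‖u‖₁. (This expresses, by duality against H¹, the bound ‖d_h − 1‖_{−1} ≤ π h for d_h = h Σ_{j=0}^{N−1} δ_{s_j}.) -/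
open MeasureTheory Set in
/-- Integration by parts for an indefinite integral, obtained from Fubini on the triangle
`0 < x ≤ t ≤ 1`; it needs no pointwise differentiability of `t ↦ ∫₀ᵗ g`. -/
lemma integral_primitive_mul {g e : ℝ → ℂ} (hg : IntegrableOn g (Ioc (0:ℝ) 1))
    (he : Continuous e) :
    ∫ t in (0:ℝ)..1, (∫ x in (0:ℝ)..t, g x) * e t
      = ∫ x in (0:ℝ)..1, g x * ∫ t in x..1, e t := by
  have heI : IntegrableOn e (Ioc (0:ℝ) 1) :=
    (he.integrableOn_Icc (a := 0) (b := 1)).mono_set Ioc_subset_Icc_self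
  set F : ℝ → ℝ → ℂ := fun t x => if x ≤ t then e t * g x else 0 with hF
  have hmeas : MeasurableSet {p : ℝ × ℝ | p.2 ≤ p.1} :=
    measurableSet_le measurable_snd measurable_fst
  have hint : Integrable (Function.uncurry F)
      ((volume.restrict (Ioc (0:ℝ) 1)).prod (volume.restrict (Ioc (0:ℝ) 1))) := by
    have := (Integrable.mul_prod heI hg).indicator hmeas
    refine this.congr (Filter.Eventually.of_forall fun p => ?_)
    by_cases hp : p.2 ≤ p.1 <;> simp [hF, Function.uncurry, indicator, hp]
  have hswap := integral_integral_swap hint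
  rw [intervalIntegral.integral_of_le zero_le_one, intervalIntegral.integral_of_le zero_le_one]
  refine Eq.trans ?_ (hswap.trans ?_)
  · refine setIntegral_congr_fun measurableSet_Ioc fun t ht => ?_
    have h1 : ∀ x, F t x = (Iic t).indicator (fun x => e t * g x) x := fun x => by
      simp [hF, indicator]
    simp only [h1]
    rw [setIntegral_indicator measurableSet_Iic, Ioc_inter_Iic, min_eq_right ht.2,
      integral_const_mul, intervalIntegral.integral_of_le ht.1.le, mul_comm]
  · refine setIntegral_congr_fun measurableSet_Ioc fun x hx => ?_
    have h1 : ∀ t, F t x = (Ici x).indicator (fun t => e t * g x) t := fun x => by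
      simp [hF, indicator]
    have h2 : Ioc (0:ℝ) 1 ∩ Ici x = Icc x 1 := by
      ext t; simp only [mem_inter_iff, mem_Ioc, mem_Ici, mem_Icc]
      exact ⟨fun h => ⟨h.2, h.1.2⟩, fun h => ⟨⟨hx.1.trans_le h.1, h.2⟩, h.1⟩⟩
    simp only [h1]
    rw [setIntegral_indicator measurableSet_Ici, h2, integral_Icc_eq_integral_Ioc,
      integral_mul_const, intervalIntegral.integral_of_le hx.2, mul_comm]

open Complex in
/-- Integral over `[x, 1]` of the character `t ↦ e^{-2πimt}`, whose value at `1` is `1`. -/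
lemma integral_char {m : ℤ} (hm : m ≠ 0) (x : ℝ) :
    ∫ t in x..1, exp (-(2 * Real.pi * I * (m : ℂ) * (t : ℂ)))
      = (exp (-(2 * Real.pi * I * (m : ℂ) * (x : ℂ))) - 1) / (2 * Real.pi * I * m) := by
  have hc : -(2 * Real.pi * I * (m : ℂ)) ≠ 0 := by
    simp [Real.pi_ne_zero, I_ne_zero, hm]
  have h1 : exp (-(2 * Real.pi * I * (m : ℂ)) * ((1:ℝ) : ℂ)) = 1 := by
    rw [exp_eq_one_iff]
    exact ⟨-m, by push_cast; ring⟩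
  have := integral_exp_mul_complex (a := x) (b := 1) hc
  rw [h1] at this
  simp only [neg_mul] at this
  rw [this, div_neg, ← neg_div, neg_sub]

/-- The Fourier coefficients of `u′ = g` are `2πim` times those of `u`. -/
lemma fc_deriv {u g : ℝ → ℂ} (hg : MeasureTheory.IntegrableOn g (Set.Ioc (0:ℝ) 1))
    (hu : Function.Periodic u 1) (hrep : ∀ t : ℝ, u t = u 0 + ∫ x in (0:ℝ)..t, g x) (m : ℤ) :
    fc g m = 2 * Real.pi * Complex.I * m * fc u m := by
  have hg0 : ∫ x in (0:ℝ)..1, g x = 0 := by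
    have h1 := hrep 1
    have h2 := hu 0
    rw [zero_add] at h2
    rw [h2] at h1
    simpa using h1
  rcases eq_or_ne m 0 with rfl | hm
  · simpa [fc] using hg0
  have hc : 2 * Real.pi * Complex.I * (m : ℂ) ≠ 0 := by
    simp [Real.pi_ne_zero, Complex.I_ne_zero, hm]
  set e : ℝ → ℂ := fun t => Complex.exp (-(2 * Real.pi * Complex.I * (m : ℂ) * (t : ℂ))) with he
  have hec : Continuous e := by fun_prop
  have hgi : IntervalIntegrable g MeasureTheory.volume 0 1 :=
    (intervalIntegrable_iff_integrableOn_Ioc_of_le zero_le_one).2 hg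
  have hP : ContinuousOn (fun t => ∫ x in (0:ℝ)..t, g x) (Set.uIcc 0 1) :=
    intervalIntegral.continuousOn_primitive_interval' hgi Set.left_mem_uIcc
  have he0 : ∫ t in (0:ℝ)..1, e t = 0 := by
    simpa [he] using integral_char hm 0
  have h1 : fc u m = ∫ t in (0:ℝ)..1, (∫ x in (0:ℝ)..t, g x) * e t := by
    have : ∀ t : ℝ, u t * e t = u 0 * e t + (∫ x in (0:ℝ)..t, g x) * e t := fun t => by
      rw [← add_mul, ← hrep t]
    have hPe : IntervalIntegrable (fun t => (∫ x in (0:ℝ)..t, g x) * e t)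
        MeasureTheory.volume 0 1 := (hP.mul hec.continuousOn).intervalIntegrable
    change ∫ t in (0:ℝ)..1, u t * e t = _
    simp only [this]
    rw [intervalIntegral.integral_add ((hec.intervalIntegrable 0 1).const_mul _)
      hPe, intervalIntegral.integral_const_mul, he0]
    simp
  have h2 : ∀ x : ℝ, g x * ∫ t in x..1, e t
      = (g x * e x - g x) / (2 * Real.pi * Complex.I * m) := fun x => by
    rw [show ∫ t in x..1, e t = _ from integral_char hm x]
    simp only [he]; ring
  rw [h1, integral_primitive_mul hg hec]
  simp only [h2]
  rw [intervalIntegral.integral_div, intervalIntegral.integral_sub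
    (hgi.mul_continuousOn hec.continuousOn) hgi, hg0, sub_zero, mul_div_cancel₀ _ hc]
  rfl

open MeasureTheory Set in
/-- Parseval: `‖u′‖_{L²} ≤ 2π ‖u‖₁`. -/
lemma sqrt_le_sobNorm {u g : ℝ → ℂ} (hg : IntegrableOn g (Ioc (0:ℝ) 1))
    (hg2 : IntegrableOn (fun t => ‖g t‖ ^ 2) (Ioc (0:ℝ) 1))
    (hu : Function.Periodic u 1) (hrep : ∀ t : ℝ, u t = u 0 + ∫ x in (0:ℝ)..t, g x) :
    Real.sqrt (∫ t in (0:ℝ)..1, ‖g t‖ ^ 2) ≤ 2 * Real.pi * sobNorm 1 u := by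
  have hL2 : MemLp g 2 (volume.restrict (Ioc (0:ℝ) 1)) :=
    (memLp_two_iff_integrable_sq_norm hg.aestronglyMeasurable).2 hg2
  have hP := hasSum_sq_fourierCoeffOn zero_lt_one hL2
  have hco : ∀ m, fourierCoeffOn zero_lt_one g m = fc g m := fun m => by
    rw [fourierCoeffOn_eq_integral, fc]
    simp only [sub_zero, div_one, one_smul]
    refine intervalIntegral.integral_congr fun t _ => ?_
    simp only [fourier_coe_apply, smul_eq_mul]
    rw [mul_comm]
    congr 2
    push_cast
    ring
  simp only [hco, fc_deriv hg hu hrep, sub_zero, inv_one, one_smul] at hP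
  have hterm : ∀ m : ℤ, ‖2 * Real.pi * Complex.I * (m : ℂ) * fc u m‖ ^ 2
      = (2 * Real.pi) ^ 2 *
        (if m = 0 then 0 else |(m : ℝ)| ^ (2 * (1:ℝ)) * ‖fc u m‖ ^ 2) := fun m => by
    rcases eq_or_ne m 0 with rfl | hm
    · simp
    · rw [if_neg hm, mul_one, Real.rpow_two]
      simp only [norm_mul, Complex.norm_I, Complex.norm_intCast, Complex.norm_real,
        Complex.norm_ofNat, Real.norm_eq_abs, abs_of_pos Real.pi_pos]
      ring
  simp only [hterm] at hP
  rw [← hP.tsum_eq, tsum_mul_left, Real.sqrt_mul (by positivity),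
    Real.sqrt_sq (by positivity), sobNorm]
  gcongr
  exact le_add_of_nonneg_left (by positivity)

open MeasureTheory Set in
/-- Midpoint rule on a single cell of width `2d` centred at `c`. -/
lemma midpoint_cell {u g : ℝ → ℂ} (hgi : ∀ a b, IntervalIntegrable g volume a b)
    (hrep : ∀ t : ℝ, u t = u 0 + ∫ x in (0:ℝ)..t, g x) (huc : Continuous u)
    (c d : ℝ) (hd : 0 ≤ d) :
    ‖(∫ t in (c - d)..(c + d), u t) - (2 * d : ℝ) * u c‖
      ≤ d * ∫ t in (c - d)..(c + d), ‖g t‖ := by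
  have hdiff : ∀ t, u t - u c = ∫ x in c..t, g x := fun t => by
    rw [hrep t, hrep c, ← intervalIntegral.integral_interval_sub_left (hgi 0 t) (hgi 0 c)]
    ring
  have hui : ∀ a b, IntervalIntegrable (fun t => u t - u c) volume a b := fun a b =>
    (huc.sub continuous_const).intervalIntegrable a b
  have heq : (∫ t in (c - d)..(c + d), u t) - (2 * d : ℝ) * u c
      = (∫ t in (c - d)..c, (u t - u c)) + ∫ t in c..(c + d), (u t - u c) := by
    rw [intervalIntegral.integral_add_adjacent_intervals (hui _ _) (hui _ _),
      intervalIntegral.integral_sub (huc.intervalIntegrable _ _) intervalIntegrable_const,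
      intervalIntegral.integral_const, Complex.real_smul]
    congr 3
    ring
  have hL : ‖∫ t in (c - d)..c, (u t - u c)‖ ≤ d * ∫ t in (c - d)..c, ‖g t‖ := by
    have := intervalIntegral.norm_integral_le_of_norm_le_const (a := c - d) (b := c)
      (f := fun t => u t - u c) (C := ∫ t in (c - d)..c, ‖g t‖) fun t ht => by
        rw [uIoc_of_le (by linarith)] at ht
        rw [hdiff, intervalIntegral.integral_symm, norm_neg]
        refine (intervalIntegral.norm_integral_le_integral_norm ht.2).trans ?_
        exact intervalIntegral.integral_mono_interval ht.1.le ht.2 le_rfl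
          (Filter.Eventually.of_forall fun _ => norm_nonneg _) (hgi _ _).norm
    rwa [sub_sub_cancel, abs_of_nonneg hd, mul_comm] at this
  have hR : ‖∫ t in c..(c + d), (u t - u c)‖ ≤ d * ∫ t in c..(c + d), ‖g t‖ := by
    have := intervalIntegral.norm_integral_le_of_norm_le_const (a := c) (b := c + d)
      (f := fun t => u t - u c) (C := ∫ t in c..(c + d), ‖g t‖) fun t ht => by
        rw [uIoc_of_le (by linarith)] at ht
        rw [hdiff]
        refine (intervalIntegral.norm_integral_le_integral_norm ht.1.le).trans ?_
        exact intervalIntegral.integral_mono_interval le_rfl ht.1.le ht.2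
          (Filter.Eventually.of_forall fun _ => norm_nonneg _) (hgi _ _).norm
    rwa [add_sub_cancel_left, abs_of_nonneg hd, mul_comm] at this
  rw [heq, ← intervalIntegral.integral_add_adjacent_intervals (hgi _ c).norm (hgi c _).norm,
    mul_add]
  exact (norm_add_le _ _).trans (add_le_add hL hR)

/-- Cauchy–Schwarz on the unit interval, from `0 ≤ ∫ (‖g‖ - A)²` with `A = ∫ ‖g‖`. -/
lemma integral_norm_le_sqrt {g : ℝ → ℂ}
    (hgi : IntervalIntegrable g MeasureTheory.volume 0 1)
    (hg2 : IntervalIntegrable (fun t => ‖g t‖ ^ 2) MeasureTheory.volume 0 1) :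
    ∫ t in (0:ℝ)..1, ‖g t‖ ≤ Real.sqrt (∫ t in (0:ℝ)..1, ‖g t‖ ^ 2) := by
  apply Real.le_sqrt_of_sq_le
  set A := ∫ t in (0:ℝ)..1, ‖g t‖ with hA
  have h0 : 0 ≤ ∫ t in (0:ℝ)..1, (‖g t‖ - A) ^ 2 :=
    intervalIntegral.integral_nonneg zero_le_one fun _ _ => sq_nonneg _
  have h1 : ∀ t, (‖g t‖ - A) ^ 2 = ‖g t‖ ^ 2 - 2 * A * ‖g t‖ + A ^ 2 := fun t => by ring
  simp only [h1] at h0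
  rw [intervalIntegral.integral_add (hg2.sub (hgi.norm.const_mul _)) intervalIntegrable_const,
    intervalIntegral.integral_sub hg2 (hgi.norm.const_mul _),
    intervalIntegral.integral_const_mul, ← hA] at h0
  simp only [intervalIntegral.integral_const, sub_zero, one_smul] at h0
  nlinarith

/-- midpoint-rule bound
`|∫₀¹ u − h Σ_j u(s_j)| ≤ (h/2)‖u′‖_{L²(0,1)} ≤ π h ‖u‖₁` for a 1-periodic absolutely
continuous `u` (written as the indefinite integral of `g = u′`) with `u′ ∈ L²(0,1)`. -/
theorem stmt_7
    (N : ℕ) (hN : 0 < N) (u g : ℝ → ℂ)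
    (hu : Function.Periodic u 1)
    (hgloc : MeasureTheory.LocallyIntegrable g MeasureTheory.volume)
    (hrep : ∀ t : ℝ, u t = u 0 + ∫ x in (0:ℝ)..t, g x)
    (hg2 : MeasureTheory.IntegrableOn (fun t => ‖g t‖ ^ 2) (Set.Ioc (0:ℝ) 1)) :
    ‖(∫ t in (0:ℝ)..1, u t)
        - (1 / (N : ℂ)) * ∑ j ∈ Finset.range N, u (sg (1 / (N : ℝ)) 0 (j : ℤ))‖ ≤
      (1 / (N : ℝ)) / 2 * Real.sqrt (∫ t in (0:ℝ)..1, ‖g t‖ ^ 2) ∧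
    (1 / (N : ℝ)) / 2 * Real.sqrt (∫ t in (0:ℝ)..1, ‖g t‖ ^ 2) ≤
      Real.pi * (1 / (N : ℝ)) * sobNorm 1 u := by
  have hgi : ∀ a b, IntervalIntegrable g MeasureTheory.volume a b := fun a b =>
    intervalIntegrable_iff.2
      ((hgloc.integrableOn_isCompact isCompact_uIcc).mono_set Set.uIoc_subset_uIcc)
  have hg : MeasureTheory.IntegrableOn g (Set.Ioc (0:ℝ) 1) :=
    (intervalIntegrable_iff_integrableOn_Ioc_of_le zero_le_one).1 (hgi 0 1)
  have hg2i : IntervalIntegrable (fun t => ‖g t‖ ^ 2) MeasureTheory.volume 0 1 :=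
    (intervalIntegrable_iff_integrableOn_Ioc_of_le zero_le_one).2 hg2
  have huc : Continuous u := by
    rw [show u = fun t => u 0 + ∫ x in (0:ℝ)..t, g x from funext hrep]
    exact continuous_const.add (intervalIntegral.continuous_primitive hgi 0)
  have hNR : (0:ℝ) < N := by exact_mod_cast hN
  constructor
  · set h : ℝ := 1 / (N : ℝ) with hh
    have hh0 : 0 ≤ h := by positivity
    have hNh : (N : ℝ) * h = 1 := by rw [hh]; field_simp
    -- By periodicity `s₀ = -h/2` may be replaced by `s_N = 1 - h/2`, so the nodes become the
    -- midpoints of the cells `[kh, (k+1)h]`, `0 ≤ k < N`.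
    have hsum : ∑ j ∈ Finset.range N, u (sg h 0 (j : ℤ))
        = ∑ k ∈ Finset.range N, u (k * h + h / 2) := by
      have hend : u (sg h 0 ((N : ℕ) : ℤ)) = u (sg h 0 ((0 : ℕ) : ℤ)) := by
        rw [← hu (sg h 0 ((0 : ℕ) : ℤ))]
        congr 1
        simp only [sg]
        push_cast
        linear_combination hNh
      have h1 := Finset.sum_range_succ (fun j : ℕ => u (sg h 0 (j : ℤ))) N
      rw [Finset.sum_range_succ', hend] at h1
      rw [← add_right_cancel h1]
      refine Finset.sum_congr rfl fun k _ => congrArg u ?_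
      simp only [sg]
      push_cast
      ring
    have hcell : ∀ k : ℕ, ‖(∫ t in (k * h : ℝ)..((k + 1 : ℕ) * h : ℝ), u t)
          - (1 / (N : ℂ)) * u (k * h + h / 2)‖
        ≤ h / 2 * ∫ t in (k * h : ℝ)..((k + 1 : ℕ) * h : ℝ), ‖g t‖ := fun k => by
      have := midpoint_cell hgi hrep huc (k * h + h / 2) (h / 2) (by positivity)
      rw [show (k * h + h / 2 - h / 2 : ℝ) = k * h by ring,
        show (k * h + h / 2 + h / 2 : ℝ) = (k + 1 : ℕ) * h by push_cast; ring,
        show (2 * (h / 2) : ℝ) = h by ring] at this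
      rwa [show ((h : ℝ) : ℂ) = 1 / (N : ℂ) by rw [hh]; push_cast; rfl] at this
    have hends : ((0 : ℕ) : ℝ) * h = 0 := by simp
    have hIu := intervalIntegral.sum_integral_adjacent_intervals (f := u)
      (μ := MeasureTheory.volume) (a := fun k : ℕ => (k * h : ℝ)) (n := N)
      fun k _ => huc.intervalIntegrable _ _
    have hIg := intervalIntegral.sum_integral_adjacent_intervals (f := fun t => ‖g t‖)
      (μ := MeasureTheory.volume) (a := fun k : ℕ => (k * h : ℝ)) (n := N)
      fun k _ => (hgi _ _).norm
    simp only [hends, hNh] at hIu hIg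
    rw [hsum, ← hIu, Finset.mul_sum, ← Finset.sum_sub_distrib]
    refine (norm_sum_le _ _).trans ((Finset.sum_le_sum fun k _ => hcell k).trans ?_)
    rw [← Finset.mul_sum, hIg]
    gcongr
    exact integral_norm_le_sqrt (hgi 0 1) hg2i
  · calc (1 / (N : ℝ)) / 2 * Real.sqrt (∫ t in (0:ℝ)..1, ‖g t‖ ^ 2)
        ≤ (1 / (N : ℝ)) / 2 * (2 * Real.pi * sobNorm 1 u) := by
          gcongr
          exact sqrt_le_sobNorm hg hg2 hu hrep
      _ = Real.pi * (1 / (N : ℝ)) * sobNorm 1 u := by ring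
end
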